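/- arXiv:1404.7764 — 2 statements merged into one kernel-verified Lean document; each statement's English description precedes it below -/
import Mathlib

section
/- For all integers a ≥ 2 and b with b > (a−1)!, there exist a constant c > 0 and an integer d₀ such that for all d ≥ d₀, every d-regular graph G has a spanning subgraph H containing no copy of the complete bipartite graph K_{a,b} and with minimum degree δ(H) ≥ c·d^{1−1/a}. -/
open SimpleGraph

def ContainsCopy {α β : Type*} (F : SimpleGraph α) (H : SimpleGraph β) : Prop :=
  ∃ f : F →g H, Function.Injective f

abbrev GraphFamily := Set (Σ n : ℕ, SimpleGraph (Fin n))

def FamFree {β : Type*} (H : SimpleGraph β) (𝓕 : GraphFamily) : Prop :=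
  ∀ F ∈ 𝓕, ¬ ContainsCopy F.2 H

noncomputable def extremalNum (n : ℕ) (𝓕 : GraphFamily) : ℕ :=
  sSup {k | ∃ H : SimpleGraph (Fin n), FamFree H 𝓕 ∧ k = H.edgeSet.ncard}

def LocallyInjective {α β : Type*} {F : SimpleGraph α} {G : SimpleGraph β}
    (φ : F →g G) : Prop :=
  ∀ v : α, Set.InjOn φ (F.neighborSet v)

def NoLocInjHom {α β : Type*} (F : SimpleGraph α) (G : SimpleGraph β) : Prop :=
  ¬ ∃ φ : F →g G, LocallyInjective φ

def ClosedFamily (𝓕 : GraphFamily) : Prop :=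
  ∀ (W : Type) [Fintype W] (G : SimpleGraph W),
    (∀ F ∈ 𝓕, NoLocInjHom F.2 G) ↔ FamFree G 𝓕

noncomputable def deg {β : Type*} (H : SimpleGraph β) (v : β) : ℕ :=
  (H.neighborSet v).ncard

noncomputable def minDeg {β : Type*} [Fintype β] (H : SimpleGraph β) : ℕ :=
  ⨅ v, deg H v

noncomputable def maxDeg {β : Type*} [Fintype β] (H : SimpleGraph β) : ℕ :=
  ⨆ v, deg H v

def RegularDeg {β : Type*} (G : SimpleGraph β) (d : ℕ) : Prop :=
  ∀ v, deg G v = d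

noncomputable def Bad {α γ : Type*} (G : SimpleGraph α) (χ : α → γ) (v : α) : ℕ :=
  {u | u ∈ G.neighborSet v ∧ ∃ v', v' ∈ G.neighborSet u ∧ v' ≠ v ∧ χ v' = χ v}.ncard

/-!
Let `χ` be a colouring of the vertices of `H` by the vertices of a `K_{a,b}`-free graph `Γ` that is
a graph homomorphism and injective on neighbourhoods. Then `H` is `K_{a,b}`-free as well. For `Γ`
take the projective norm graph of Alon, Rónyai and Szabó on `L × Fˣ`, where `F` has `p` elements and
`[L : F] = a - 1`: it has about `p ^ a` vertices, all of degree about `p ^ (a - 1)`, and no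
`K_{a,(a-1)!+1}`. The last claim holds since over a splitting field the norm equations become
`∏ i, (x i - α j i) = β j` with `n = a - 1` equations in `n` unknowns; the polynomial ring is
integral of rank at most `n!` over the subalgebra generated by the left-hand sides, so there are
at most `n!` solutions.

Choose `p` such that `p ^ a` is a large multiple of `d`. A maximum cut makes `G` bipartite at the
cost of half the degree. Colour its sides in turn at random from `Θ(d)` vertices of `Γ`, and
keep the edges whose ends get adjacent colours and do not share a colour with a competing
neighbour. About one edge in `p` has adjacent colours, and with a large enough palette a constant
proportion of these avoid collisions. By the local lemma each vertex then has order
`d / p ≈ d ^ (1 - 1 / a)` usable edges. The vertices most of whose usable edges collide are few in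
every neighbourhood; they are recoloured from a disjoint reserve palette in rounds, each of which
divides their number by a constant factor.
-/

open Finset

section Independence

variable {V Y : Type*} [Fintype V] [Fintype Y] [DecidableEq Y]

theorem dens_inter_of_dependsOn [DecidableEq V] {D : Finset V} {P Q : Finset (V → Y)}
    (hP : DependsOn (· ∈ P) (D : Set V)) (hQ : DependsOn (· ∈ Q) (D : Set V)ᶜ) :
    (P ∩ Q).dens = P.dens * Q.dens := by
  rcases isEmpty_or_nonempty (V → Y) with _ | _
  · simp [Subsingleton.elim P ∅]
  have exchange : #((P ∩ Q) ×ˢ (univ : Finset (V → Y))) = #(P ×ˢ Q) := by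
    let swap (fg : (V → Y) × (V → Y)) := (D.piecewise fg.1 fg.2, D.piecewise fg.2 fg.1)
    have hswap : ∀ fg, swap (swap fg) = fg := fun fg ↦ by
      ext x <;> by_cases hx : x ∈ D <;> simp [swap, hx]
    have hP₁ : ∀ fg, (swap fg).1 ∈ P ↔ fg.1 ∈ P := fun fg ↦
      iff_of_eq (hP fun x hx ↦ D.piecewise_eq_of_mem _ _ hx)
    have hQ₁ : ∀ fg, (swap fg).1 ∈ Q ↔ fg.2 ∈ Q := fun fg ↦
      iff_of_eq (hQ fun x hx ↦ D.piecewise_eq_of_notMem _ _ hx)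
    have hQ₂ : ∀ fg, (swap fg).2 ∈ Q ↔ fg.1 ∈ Q := fun fg ↦
      iff_of_eq (hQ fun x hx ↦ D.piecewise_eq_of_notMem _ _ hx)
    refine card_nbij' swap swap (fun fg hfg ↦ ?_) (fun fg hfg ↦ ?_)
      (fun fg _ ↦ hswap fg) (fun fg _ ↦ hswap fg)
    · simp only [coe_product, Set.mem_prod, mem_coe, mem_inter] at hfg ⊢
      exact ⟨(hP₁ fg).2 hfg.1.1, (hQ₂ fg).2 hfg.1.2⟩
    · simp only [coe_product, Set.mem_prod, mem_coe, mem_inter] at hfg ⊢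
      exact ⟨⟨(hP₁ fg).2 hfg.1, (hQ₁ fg).2 hfg.2⟩, mem_univ _⟩
  rw [card_product, card_product, card_univ] at exchange
  have hcard : (Fintype.card (V → Y) : ℚ≥0) ≠ 0 := mod_cast Fintype.card_ne_zero
  rw [dens, dens, dens, div_mul_div_comm, div_eq_div_iff hcard (mul_ne_zero hcard hcard),
    ← mul_assoc]
  exact_mod_cast congrArg (· * Fintype.card (V → Y)) exchange

theorem dens_filter_forall_mem [DecidableEq V] [Nonempty Y] (Γ : Finset V) (Z : V → Finset Y) :
    ({f | ∀ x ∈ Γ, f x ∈ Z x} : Finset (V → Y)).dens = ∏ x ∈ Γ, (Z x).dens := by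
  classical
  have hpi : ({f | ∀ x ∈ Γ, f x ∈ Z x} : Finset (V → Y)) =
      Fintype.piFinset fun x ↦ if x ∈ Γ then Z x else univ := by
    ext f
    simp only [mem_filter_univ, Fintype.mem_piFinset]
    exact forall_congr' fun x ↦ by by_cases hx : x ∈ Γ <;> simp [hx]
  rw [hpi, dens, Fintype.card_piFinset, Fintype.card_pi, Nat.cast_prod, Nat.cast_prod,
    ← prod_div_distrib, ← prod_subset (subset_univ Γ) fun x _ hx ↦ by simp [hx]]
  exact prod_congr rfl fun x hx ↦ by rw [if_pos hx, dens]

end Independence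

section UnionBound

variable {Ω ι : Type*} [Fintype Ω] [DecidableEq Ω]

theorem dens_biUnion_le (s : Finset ι) (E : ι → Finset Ω) :
    (s.biUnion E).dens ≤ ∑ i ∈ s, (E i).dens := by
  simp only [dens, ← sum_div]
  gcongr
  exact_mod_cast card_biUnion_le

theorem dens_le_sum_mul_dens_of_one_le_sum {E : Finset Ω} {s : Finset ι} {weight : ι → ℝ}
    {F : ι → Finset Ω} (hweight : ∀ i ∈ s, 0 ≤ weight i)
    (hE : ∀ x ∈ E, 1 ≤ ∑ i ∈ s, weight i * if x ∈ F i then 1 else 0) :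
    (E.dens : ℝ) ≤ ∑ i ∈ s, weight i * (F i).dens := by
  have hcard : (#E : ℝ) ≤ ∑ i ∈ s, weight i * #(F i) :=
    calc (#E : ℝ) = ∑ x ∈ E, 1 := by simp
      _ ≤ ∑ x ∈ E, ∑ i ∈ s, weight i * (if x ∈ F i then 1 else 0) := sum_le_sum hE
      _ ≤ ∑ x, ∑ i ∈ s, weight i * (if x ∈ F i then 1 else 0) :=
        sum_le_univ_sum_of_nonneg fun x ↦ sum_nonneg fun i hi ↦
          mul_nonneg (hweight i hi) (by positivity)
      _ = ∑ i ∈ s, weight i * #(F i) := by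
        rw [sum_comm]
        exact sum_congr rfl fun i _ ↦ by rw [← mul_sum, sum_boole, filter_univ_mem]
  simp only [nnratCast_dens, ← mul_div_assoc, ← sum_div]
  gcongr

end UnionBound

section LocalLemma

/-- The outcomes lying in none of the events `E s` with `s ∈ S`. -/
def avoiding {Ω W : Type*} [Fintype Ω] [DecidableEq Ω] (E : W → Finset Ω) (S : Finset W) :
    Finset Ω :=
  (S.biUnion E)ᶜ

section Avoiding

variable {Ω W : Type*} [Fintype Ω] [DecidableEq Ω] {E : W → Finset Ω} {S T : Finset W}

theorem mem_avoiding {x : Ω} : x ∈ avoiding E S ↔ ∀ s ∈ S, x ∉ E s := by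
  simp [avoiding]

theorem avoiding_anti (h : S ⊆ T) : avoiding E T ⊆ avoiding E S :=
  compl_subset_compl.2 (biUnion_subset_biUnion_of_subset_left E h)

theorem dens_avoiding_le [DecidableEq W] :
    (avoiding E S).dens ≤
      (avoiding E T).dens + ∑ s ∈ T \ S, (E s ∩ avoiding E S).dens := by
  have hcover : avoiding E S ⊆
      avoiding E T ∪ (T \ S).biUnion fun s ↦ E s ∩ avoiding E S := fun x hx ↦ by
    by_cases hxT : x ∈ avoiding E T
    · exact mem_union_left _ hxT
    · obtain ⟨s, hsT, hxs⟩ : ∃ s ∈ T, x ∈ E s := by simpa [mem_avoiding] using hxT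
      have hsS : s ∉ S := fun hs ↦ mem_avoiding.1 hx s hs hxs
      exact mem_union_right _ (mem_biUnion.2
        ⟨s, mem_sdiff.2 ⟨hsT, hsS⟩, mem_inter.2 ⟨hxs, hx⟩⟩)
  calc (avoiding E S).dens
      ≤ (avoiding E T).dens + ((T \ S).biUnion fun s ↦ E s ∩ avoiding E S).dens :=
        (dens_le_dens hcover).trans (dens_union_le _ _)
    _ ≤ _ := by gcongr; exact dens_biUnion_le _ _

end Avoiding

variable {V Y W : Type*} [Fintype V] [DecidableEq V] [Fintype Y]
  {E : W → Finset (V → Y)} {D : W → Finset V}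

theorem dens_inter_avoiding_of_disjoint [DecidableEq Y]
    (hdep : ∀ w, DependsOn (· ∈ E w) (D w : Set V)) {w : W} {S : Finset W}
    (hdisj : ∀ s ∈ S, Disjoint (D w) (D s)) :
    (E w ∩ avoiding E S).dens = (E w).dens * (avoiding E S).dens := by
  refine dens_inter_of_dependsOn (hdep w) fun f g hfg ↦ ?_
  have hiff : ∀ s ∈ S, (f ∈ E s ↔ g ∈ E s) := fun s hs ↦
    iff_of_eq (hdep s fun x hx ↦ hfg x fun hxw ↦ disjoint_left.1 (hdisj s hs) hxw hx)
  simp only [mem_avoiding, eq_iff_iff]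
  exact forall₂_congr fun s hs ↦ not_congr (hiff s hs)

variable [Fintype W] {p : ℝ} {Δ : ℕ}

theorem dens_inter_avoiding_le [DecidableEq Y]
    (hdep : ∀ w, DependsOn (· ∈ E w) (D w : Set V))
    (hp : ∀ w, ((E w).dens : ℝ) ≤ p) (hΔ : ∀ w, #{w' | ¬ Disjoint (D w) (D w')} ≤ Δ)
    (hpΔ : 4 * p * Δ ≤ 1) (S : Finset W) (w : W) :
    ((E w ∩ avoiding E S).dens : ℝ) ≤ 2 * p * (avoiding E S).dens := by
  classical
  induction S using Finset.strongInduction generalizing w with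
  | H S ih =>
  let far := S.filter fun s ↦ Disjoint (D w) (D s)
  have hp0 : 0 ≤ p := le_trans (by positivity) (hp w)
  have hfar : ((E w ∩ avoiding E far).dens : ℝ) ≤ p * (avoiding E far).dens := by
    rw [dens_inter_avoiding_of_disjoint hdep fun s hs ↦ (mem_filter.1 hs).2, NNRat.cast_mul]
    gcongr
    exact hp w
  have hmono : ((E w ∩ avoiding E S).dens : ℝ) ≤ (E w ∩ avoiding E far).dens :=
    mod_cast dens_le_dens (inter_subset_inter_left (avoiding_anti (filter_subset _ S)))
  suffices hhalf : ((avoiding E far).dens : ℝ) ≤ 2 * (avoiding E S).dens by nlinarith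
  by_cases hS : far = S
  · rw [hS]
    linarith [show (0 : ℝ) ≤ (avoiding E S).dens by positivity]
  have hnear : (#(S \ far) : ℝ) ≤ Δ := by
    refine mod_cast (card_le_card fun s hs ↦ ?_).trans (hΔ w)
    have := mem_sdiff.1 hs
    simpa [far, this.1] using this.2
  have hsum : ∑ s ∈ S \ far, ((E s ∩ avoiding E far).dens : ℝ) ≤
      #(S \ far) * (2 * p * (avoiding E far).dens) := by
    rw [← nsmul_eq_mul]
    exact sum_le_card_nsmul _ _ _ fun s _ ↦
      ih far ((filter_subset _ _).ssubset_of_ne hS) s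
  have hsplit : ((avoiding E far).dens : ℝ) ≤
      (avoiding E S).dens + ∑ s ∈ S \ far, ((E s ∩ avoiding E far).dens : ℝ) := by
    simpa only [NNRat.cast_add, NNRat.cast_sum] using
      NNRat.cast_le (K := ℝ).2 (dens_avoiding_le (E := E) (S := far) (T := S))
  have hshare : #(S \ far) * (2 * p * ((avoiding E far).dens : ℝ)) ≤
      (avoiding E far).dens / 2 :=
    calc #(S \ far) * (2 * p * ((avoiding E far).dens : ℝ))
        ≤ Δ * (2 * p * (avoiding E far).dens) := by gcongr
      _ = 4 * p * Δ * ((avoiding E far).dens / 2) := by ring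
      _ ≤ 1 * ((avoiding E far).dens / 2) := by gcongr
      _ = (avoiding E far).dens / 2 := one_mul _
  linarith

theorem exists_forall_notMem_of_four_mul_le_one [Nonempty Y]
    (hdep : ∀ w, DependsOn (· ∈ E w) (D w : Set V)) (hp : ∀ w, ((E w).dens : ℝ) ≤ p)
    (hΔ : ∀ w, #{w' | ¬ Disjoint (D w) (D w')} ≤ Δ) (hΔ1 : 1 ≤ Δ) (hpΔ : 4 * p * Δ ≤ 1) :
    ∃ f : V → Y, ∀ w, f ∉ E w := by
  classical
  have hpos : ∀ S : Finset W, (0 : ℝ) < (avoiding E S).dens := fun S ↦ by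
    induction S using Finset.induction_on with
    | empty => simp [avoiding]
    | insert w S hw ih =>
      have hp0 : 0 ≤ p := le_trans (by positivity) (hp w)
      have hp4 : 4 * p ≤ 1 := le_trans (le_mul_of_one_le_right (by positivity) (mod_cast hΔ1)) hpΔ
      have hcond := dens_inter_avoiding_le hdep hp hΔ hpΔ S w
      have hsplit := NNRat.cast_le (K := ℝ).2
        (dens_avoiding_le (E := E) (S := S) (T := insert w S))
      rw [insert_sdiff_cancel hw, sum_singleton, NNRat.cast_add] at hsplit
      nlinarith
  obtain ⟨f, hf⟩ := dens_pos.1 (NNRat.cast_pos.1 (hpos univ))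
  exact ⟨f, fun w ↦ mem_avoiding.1 hf w (mem_univ w)⟩

end LocalLemma

section RandomColouring

variable {V Y : Type*} [Fintype V] [DecidableEq V]

/-- The choices of a vertex `ξ u ≠ u` for each `u ∈ I`. -/
def partnerMaps (I : Finset V) : Finset (I → V) :=
  Fintype.piFinset fun u ↦ univ.erase (u : V)

theorem sum_partnerMaps_prod_le {I : Finset V} {ω : V → Y → V → ℝ}
    (hω : ∀ u c x, 0 ≤ ω u c x) {κ : ℝ} (hκ : ∀ u ∈ I, ∀ c, ∑ x, ω u c x ≤ κ)
    (c : I → Y) :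
    ∑ ξ ∈ partnerMaps I, ∏ u : I, ω u (c u) (ξ u) ≤ κ ^ #I := by
  rw [partnerMaps, ← prod_univ_sum]
  calc ∏ u : I, ∑ x ∈ univ.erase (u : V), ω u (c u) x ≤ ∏ _u : I, κ :=
        prod_le_prod (fun u _ ↦ sum_nonneg fun x _ ↦ hω _ _ _) fun u _ ↦
          (sum_le_univ_sum_of_nonneg fun x ↦ hω _ _ _).trans (hκ u u.2 _)
    _ = κ ^ #I := by simp

variable [Fintype Y] [DecidableEq Y]

theorem dens_filter_card_image_inter_le [Nonempty Y] (Γ : Finset V) {S : Finset Y} {r : ℕ}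
    (hr : r ≤ #S) :
    (({f | #(Γ.image f ∩ S) ≤ r} : Finset (V → Y)).dens : ℝ) ≤
      (#S).choose r * ((Fintype.card Y - #S + r : ℝ) / Fintype.card Y) ^ #Γ := by
  let confined (T : Finset Y) : Finset (V → Y) := {f | ∀ x ∈ Γ, f x ∈ Sᶜ ∪ T}
  have hcover : ({f | #(Γ.image f ∩ S) ≤ r} : Finset (V → Y)) ⊆
      (S.powersetCard r).biUnion confined := fun f hf ↦ by
    obtain ⟨T, hT, hTS, hTr⟩ := exists_subsuperset_card_eq inter_subset_right
      (mem_filter.1 hf).2 hr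
    refine mem_biUnion.2 ⟨T, mem_powersetCard.2 ⟨hTS, hTr⟩, mem_filter.2 ⟨mem_univ _, ?_⟩⟩
    intro x hx
    by_cases hxS : f x ∈ S
    · exact mem_union_right _ (hT (mem_inter.2 ⟨mem_image_of_mem f hx, hxS⟩))
    · exact mem_union_left _ (mem_compl.2 hxS)
  have hconfined : ∀ T ∈ S.powersetCard r, ((confined T).dens : ℝ) ≤
      ((Fintype.card Y - #S + r : ℝ) / Fintype.card Y) ^ #Γ := fun T hT ↦ by
    have hcard : (#(Sᶜ ∪ T) : ℝ) ≤ Fintype.card Y - #S + r := by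
      rw [← (mem_powersetCard.1 hT).2, ← Nat.cast_sub (card_le_univ S), ← card_compl]
      exact_mod_cast card_union_le _ _
    rw [dens_filter_forall_mem Γ fun _ ↦ Sᶜ ∪ T, prod_const, NNRat.cast_pow, nnratCast_dens]
    gcongr
  calc _ ≤ (((S.powersetCard r).biUnion confined).dens : ℝ) := mod_cast dens_le_dens hcover
    _ ≤ ∑ T ∈ S.powersetCard r, ((confined T).dens : ℝ) := mod_cast dens_biUnion_le _ _
    _ ≤ _ := by
      rw [← card_powersetCard, ← nsmul_eq_mul]
      exact sum_le_card_nsmul _ _ _ hconfined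

theorem dens_filter_eqOn [Nonempty Y] (Γ : Finset V) (f₀ : V → Y) :
    (({f | ∀ x ∈ Γ, f x = f₀ x} : Finset (V → Y)).dens : ℝ) = (1 / Fintype.card Y) ^ #Γ := by
  have h := dens_filter_forall_mem Γ fun x ↦ {f₀ x}
  simp only [mem_singleton, dens_singleton, prod_const] at h
  simp [h]

/-- The colourings that give both `u` and its partner `ξ u` the colour `c u`, for each `u ∈ I`. -/
def pairColourings (I : Finset V) (c : I → Y) (ξ : I → V) : Finset (V → Y) :=
  {f | ∀ u : I, f u = c u ∧ f (ξ u) = c u}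

theorem mem_pairColourings {I : Finset V} {c : I → Y} {ξ : I → V} {f : V → Y} :
    f ∈ pairColourings I c ξ ↔ ∀ u : I, f u = c u ∧ f (ξ u) = c u := by
  simp [pairColourings]

theorem dens_pairColourings_le [Nonempty Y] {I : Finset V} {c : I → Y}
    (hc : Function.Injective c) {ξ : I → V} (hξ : ∀ u, ξ u ≠ u) :
    ((pairColourings I c ξ).dens : ℝ) ≤ (1 / Fintype.card Y ^ 2) ^ #I := by
  rcases (pairColourings I c ξ).eq_empty_or_nonempty with hempty | ⟨f₀, hf₀⟩
  · rw [hempty, dens_empty, NNRat.cast_zero]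
    positivity
  rw [mem_pairColourings] at hf₀
  have hξ_inj : Function.Injective ξ := fun u v huv ↦
    hc (by rw [← (hf₀ u).2, ← (hf₀ v).2, huv])
  have hdisj : Disjoint I (univ.image ξ) := by
    refine disjoint_left.2 fun x hxI hx ↦ ?_
    obtain ⟨v, -, rfl⟩ := mem_image.1 hx
    have hv : (⟨ξ v, hxI⟩ : I) = v := hc (by rw [← (hf₀ v).2, ← (hf₀ ⟨ξ v, hxI⟩).1])
    exact hξ v (congrArg Subtype.val hv)
  have hcard : #(I ∪ univ.image ξ) = 2 * #I := by
    rw [card_union_of_disjoint hdisj, card_image_of_injective _ hξ_inj, card_univ,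
      Fintype.card_coe, two_mul]
  have hsub : pairColourings I c ξ ⊆
      ({f | ∀ x ∈ I ∪ univ.image ξ, f x = f₀ x} : Finset (V → Y)) := fun f hf ↦ by
    rw [mem_pairColourings] at hf
    refine mem_filter.2 ⟨mem_univ _, fun x hx ↦ ?_⟩
    rcases mem_union.1 hx with hxI | hx
    · rw [(hf ⟨x, hxI⟩).1, (hf₀ ⟨x, hxI⟩).1]
    · obtain ⟨v, -, rfl⟩ := mem_image.1 hx
      rw [(hf v).2, (hf₀ v).2]
  calc ((pairColourings I c ξ).dens : ℝ)
      ≤ ({f | ∀ x ∈ I ∪ univ.image ξ, f x = f₀ x} : Finset (V → Y)).dens :=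
        mod_cast dens_le_dens hsub
    _ = (1 / Fintype.card Y ^ 2) ^ #I := by
      rw [dens_filter_eqOn, hcard, pow_mul, one_div_pow]

/-- Under the colouring `f`, the other vertices coloured like `u` carry total weight at least `1`.
The weight `ω u c x` that a vertex `x` exerts on `u` may depend on the colour `c` of `u`. -/
def Overloaded (ω : V → Y → V → ℝ) (f : V → Y) (u : V) : Prop :=
  1 ≤ ∑ x ∈ univ.erase u with f x = f u, ω u (f u) x

section Weights

variable {I : Finset V} {ω : V → Y → V → ℝ}

theorem one_le_sum_prod_of_overloaded {f : V → Y} (hf : ∀ u ∈ I, Overloaded ω f u) :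
    1 ≤ ∑ ξ ∈ partnerMaps I, (∏ u : I, ω u (f u) (ξ u)) *
      if f ∈ pairColourings I (I.restrict f) ξ then 1 else 0 :=
  calc (1 : ℝ) ≤ ∏ u : I, ∑ x ∈ univ.erase (u : V) with f x = f u, ω u (f u) x :=
        one_le_prod fun u _ ↦ hf u u.2
    _ = ∑ ξ ∈ partnerMaps I, ∏ u : I, if f (ξ u) = f u then ω u (f u) (ξ u) else 0 := by
      simp only [sum_filter, prod_univ_sum, partnerMaps]
    _ = _ := sum_congr rfl fun ξ _ ↦ by
      simp only [prod_ite_zero, mem_pairColourings, restrict, true_and, mem_univ, forall_const,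
        mul_ite, mul_one, mul_zero]

open Classical in
theorem dens_filter_forall_overloaded_le [Nonempty Y] (S : Finset Y)
    (hω : ∀ u c x, 0 ≤ ω u c x) {κ : ℝ} (hκ : ∀ u ∈ I, ∀ c, ∑ x, ω u c x ≤ κ) :
    (({f | Set.InjOn f I ∧ ∀ u ∈ I, f u ∈ S ∧ Overloaded ω f u} : Finset (V → Y)).dens : ℝ) ≤
      (#S * κ / Fintype.card Y ^ 2) ^ #I := by
  let patterns : Finset (I → Y) := {c ∈ Fintype.piFinset fun _ ↦ S | Function.Injective c}
  let weight (p : (I → Y) × (I → V)) : ℝ := ∏ u : I, ω u (p.1 u) (p.2 u)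
  have hweight : ∀ p, 0 ≤ weight p := fun p ↦ prod_nonneg fun u _ ↦ hω _ _ _
  have hpatterns : (#patterns : ℝ) ≤ #S ^ #I := by
    exact_mod_cast (card_filter_le _ _).trans_eq (by simp)
  have hκ_pow : 0 ≤ κ ^ #I := (sum_nonneg fun ξ _ ↦ hweight (_, ξ)).trans
    (sum_partnerMaps_prod_le hω hκ fun _ ↦ Classical.arbitrary Y)
  calc _ ≤ ∑ p ∈ patterns ×ˢ partnerMaps I, weight p * (pairColourings I p.1 p.2).dens := by
        refine dens_le_sum_mul_dens_of_one_le_sum (fun p _ ↦ hweight p) fun f hf ↦ ?_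
        obtain ⟨-, hinj, hf⟩ := mem_filter.1 hf
        have hpattern : I.restrict f ∈ patterns := mem_filter.2
          ⟨Fintype.mem_piFinset.2 fun u ↦ (hf u u.2).1, hinj.injective⟩
        rw [sum_product]
        exact (one_le_sum_prod_of_overloaded fun u hu ↦ (hf u hu).2).trans <|
          single_le_sum (f := fun c ↦ ∑ ξ ∈ partnerMaps I, weight (c, ξ) *
            if f ∈ pairColourings I c ξ then 1 else 0) (fun c _ ↦ sum_nonneg fun ξ _ ↦
              mul_nonneg (hweight _) (by positivity)) hpattern
    _ ≤ ∑ p ∈ patterns ×ˢ partnerMaps I, weight p * (1 / Fintype.card Y ^ 2) ^ #I := by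
      refine sum_le_sum fun p hp ↦ mul_le_mul_of_nonneg_left ?_ (hweight p)
      obtain ⟨hc, hξ⟩ := mem_product.1 hp
      exact dens_pairColourings_le (mem_filter.1 hc).2 fun u ↦
        (mem_erase.1 (Fintype.mem_piFinset.1 hξ u)).1
    _ = ∑ c ∈ patterns, (∑ ξ ∈ partnerMaps I, weight (c, ξ)) *
        (1 / Fintype.card Y ^ 2) ^ #I := by simp only [sum_product, sum_mul]
    _ ≤ ∑ c ∈ patterns, κ ^ #I * (1 / Fintype.card Y ^ 2) ^ #I := by
      gcongr with c
      exact sum_partnerMaps_prod_le hω hκ c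
    _ = #patterns * (κ ^ #I * (1 / Fintype.card Y ^ 2) ^ #I) := by simp
    _ ≤ #S ^ #I * (κ ^ #I * (1 / Fintype.card Y ^ 2) ^ #I) := by gcongr
    _ = (#S * κ / Fintype.card Y ^ 2) ^ #I := by rw [← mul_pow, ← mul_pow]; ring_nf

open Classical in
theorem dens_filter_exists_overloaded_le [Nonempty Y] (Γ : Finset V) (h : ℕ) (S : Finset Y)
    (hω : ∀ u c x, 0 ≤ ω u c x) {κ : ℝ} (hκ : ∀ u ∈ Γ, ∀ c, ∑ x, ω u c x ≤ κ) :
    (({f | ∃ I ∈ Γ.powersetCard h, Set.InjOn f I ∧ ∀ u ∈ I, f u ∈ S ∧ Overloaded ω f u} :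
        Finset (V → Y)).dens : ℝ) ≤
      (#Γ).choose h * (#S * κ / Fintype.card Y ^ 2) ^ h := by
  let overloadedOn (I : Finset V) : Finset (V → Y) :=
    {f | Set.InjOn f I ∧ ∀ u ∈ I, f u ∈ S ∧ Overloaded ω f u}
  have hunion : ({f | ∃ I ∈ Γ.powersetCard h, Set.InjOn f I ∧
      ∀ u ∈ I, f u ∈ S ∧ Overloaded ω f u} : Finset (V → Y)) =
      (Γ.powersetCard h).biUnion overloadedOn := by
    ext f
    simp [overloadedOn]
  calc _ ≤ ∑ I ∈ Γ.powersetCard h, ((overloadedOn I).dens : ℝ) := by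
        rw [hunion]
        exact_mod_cast dens_biUnion_le _ _
    _ ≤ _ := by
      rw [← card_powersetCard, ← nsmul_eq_mul]
      refine sum_le_card_nsmul _ _ _ fun I hI ↦ ?_
      obtain ⟨hIΓ, rfl⟩ := mem_powersetCard.1 hI
      exact dens_filter_forall_overloaded_le S hω fun u hu ↦ hκ u (hIΓ hu)

end Weights

end RandomColouring

section ThreeSteps

variable {V : Type*} [Fintype V] [DecidableEq V] (G : SimpleGraph V) [DecidableRel G.Adj]

/-- The end vertices of the walks of length three from `w`. The neighbours of `w` are among
them, since a walk may turn back. -/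
def threeStepFinset (w : V) : Finset V :=
  ((G.neighborFinset w).biUnion fun y ↦ G.neighborFinset y).biUnion fun z ↦ G.neighborFinset z

variable {G}

theorem mem_threeStepFinset {w x : V} :
    x ∈ threeStepFinset G w ↔ ∃ y z, G.Adj w y ∧ G.Adj y z ∧ G.Adj z x := by
  simp only [threeStepFinset, mem_biUnion, mem_neighborFinset]
  exact ⟨fun ⟨z, ⟨y, hy, hz⟩, hx⟩ ↦ ⟨y, z, hy, hz, hx⟩, fun ⟨y, z, hy, hz, hx⟩ ↦
    ⟨z, ⟨y, hy, hz⟩, hx⟩⟩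

theorem mem_threeStepFinset_of_adj {w x : V} (h : G.Adj w x) : x ∈ threeStepFinset G w :=
  mem_threeStepFinset.2 ⟨x, w, h, h.symm, h⟩

theorem mem_threeStepFinset_comm {w x : V} :
    x ∈ threeStepFinset G w ↔ w ∈ threeStepFinset G x := by
  simp only [mem_threeStepFinset]
  exact ⟨fun ⟨y, z, hy, hz, hx⟩ ↦ ⟨z, y, hx.symm, hz.symm, hy.symm⟩,
    fun ⟨y, z, hy, hz, hx⟩ ↦ ⟨z, y, hx.symm, hz.symm, hy.symm⟩⟩

variable {d : ℕ}

theorem card_threeStepFinset_le (hd : ∀ w, G.degree w ≤ d) (w : V) :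
    #(threeStepFinset G w) ≤ d ^ 3 :=
  calc #(threeStepFinset G w)
      ≤ #((G.neighborFinset w).biUnion fun y ↦ G.neighborFinset y) * d :=
        card_biUnion_le_card_mul _ _ _ fun x _ ↦ hd x
    _ ≤ #(G.neighborFinset w) * d * d := by
      gcongr
      exact card_biUnion_le_card_mul _ _ _ fun x _ ↦ hd x
    _ ≤ d * d * d := by
      gcongr
      exact hd w
    _ = d ^ 3 := by ring

theorem card_filter_not_disjoint_threeStepFinset_le (hd : ∀ w, G.degree w ≤ d) (w : V) :
    #{w' | ¬ Disjoint (threeStepFinset G w) (threeStepFinset G w')} ≤ d ^ 6 := by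
  have hsub : ({w' | ¬ Disjoint (threeStepFinset G w) (threeStepFinset G w')} : Finset V) ⊆
      (threeStepFinset G w).biUnion (threeStepFinset G) := fun w' hw' ↦ by
    obtain ⟨x, hx, hx'⟩ := not_disjoint_iff.1 (mem_filter.1 hw').2
    exact mem_biUnion.2 ⟨x, hx, mem_threeStepFinset_comm.1 hx'⟩
  calc _ ≤ #((threeStepFinset G w).biUnion (threeStepFinset G)) := card_le_card hsub
    _ ≤ #(threeStepFinset G w) * d ^ 3 :=
      card_biUnion_le_card_mul _ _ _ fun x _ ↦ card_threeStepFinset_le hd x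
    _ ≤ d ^ 3 * d ^ 3 := by
      gcongr
      exact card_threeStepFinset_le hd w
    _ = d ^ 6 := by ring

end ThreeSteps

section Collisions

variable {V Y : Type*} (G : SimpleGraph V) (U : Finset V)

/-- Some neighbour of `b` in `U`, other than `u` itself, has the colour of `u`. The edge `ub` may
be kept in a subgraph on which the colouring is locally injective at `b` only if this fails. -/
def Collides (f : V → Y) (b u : V) : Prop :=
  ∃ x ∈ U, G.Adj b x ∧ x ≠ u ∧ f x = f u

instance [DecidableEq V] [DecidableEq Y] [DecidableRel G.Adj] (f : V → Y) (b u : V) :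
    Decidable (Collides G U f b u) :=
  inferInstanceAs (Decidable (∃ x ∈ U, G.Adj b x ∧ x ≠ u ∧ f x = f u))

theorem collides_congr {G : SimpleGraph V} {U : Finset V} {f g : V → Y} {b u : V}
    (hu : f u = g u) (hb : ∀ x, G.Adj b x → f x = g x) :
    Collides G U f b u ↔ Collides G U g b u :=
  exists_congr fun x ↦ and_congr_right fun _ ↦ and_congr_right fun hx ↦ by rw [hb x hx, hu]

variable [DecidableEq V] [DecidableEq Y] [DecidableRel G.Adj]

/-- More than half of the possible endpoints `b ∈ T` of an edge at `u` collide with `u`. -/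
def Spoiled (f : V → Y) (u : V) (T : Finset V) : Prop :=
  #T < 2 * #{b ∈ T | Collides G U f b u}

instance (f : V → Y) (u : V) (T : Finset V) : Decidable (Spoiled G U f u T) :=
  inferInstanceAs (Decidable (#T < 2 * #{b ∈ T | Collides G U f b u}))

/-- The vertex `u` does not serve as a neighbour of `w`: either it collides at `w`, or it is
spoiled for its target set `T u (f u)`. -/
def Defective (T : V → Y → Finset V) (f : V → Y) (w u : V) : Prop :=
  Spoiled G U f u (T u (f u)) ∨ Collides G U f w u

instance (T : V → Y → Finset V) (f : V → Y) (w u : V) : Decidable (Defective G U T f w u) :=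
  inferInstanceAs (Decidable (Spoiled G U f u (T u (f u)) ∨ Collides G U f w u))

variable {G U}

theorem spoiled_congr {f g : V → Y} {u : V} {T : Finset V} (hu : f u = g u)
    (hT : ∀ b ∈ T, ∀ x, G.Adj b x → f x = g x) : Spoiled G U f u T ↔ Spoiled G U g u T := by
  rw [Spoiled, Spoiled, filter_congr fun b hb ↦ collides_congr hu (hT b hb)]

variable [Fintype V]

theorem dependsOn_defective {T : V → Y → Finset V} (hT : ∀ u c, T u c ⊆ G.neighborFinset u)
    {w u : V} (hwu : G.Adj w u) :
    DependsOn (fun f ↦ Defective G U T f w u) (threeStepFinset G w : Set V) := fun f g hfg ↦ by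
  have hnear : ∀ x, G.Adj w x → f x = g x := fun x hx ↦ hfg x (mem_threeStepFinset_of_adj hx)
  have hu : f u = g u := hnear u hwu
  simp only [Defective, collides_congr hu hnear]
  rw [hu, spoiled_congr hu fun b hb x hx ↦ hfg x
    (mem_threeStepFinset.2 ⟨u, b, hwu, (G.mem_neighborFinset u b).1 (hT _ _ hb), hx⟩)]

end Collisions

section DefectiveVertices

variable {V Y : Type*} [Fintype V] [DecidableEq V] (G : SimpleGraph V) [DecidableRel G.Adj]
  (U : Finset V)

/-- The weight of `x` in the condition `Spoiled G U f u T`: twice the proportion of `b ∈ T` at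
which `x` causes a collision if it has the colour of `u`. -/
noncomputable def spoilWeight (T : Finset V) (x : V) : ℝ :=
  2 / #T * ∑ b ∈ T, if x ∈ G.neighborFinset b ∩ U then 1 else 0

variable {G U}

theorem spoilWeight_nonneg (T : Finset V) (x : V) : 0 ≤ spoilWeight G U T x := by
  unfold spoilWeight
  positivity

theorem sum_spoilWeight_le {n : ℕ} (hn : ∀ b, #(G.neighborFinset b ∩ U) ≤ n) (T : Finset V) :
    ∑ x, spoilWeight G U T x ≤ 2 * n := by
  rcases T.eq_empty_or_nonempty with rfl | hT
  · simp [spoilWeight]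
  have : (0 : ℝ) < #T := mod_cast hT.card_pos
  calc ∑ x, spoilWeight G U T x
      = 2 / #T * ∑ b ∈ T, ∑ x, if x ∈ G.neighborFinset b ∩ U then 1 else 0 := by
        simp only [spoilWeight]
        rw [← mul_sum, sum_comm]
    _ ≤ 2 / #T * ∑ _b ∈ T, (n : ℝ) := by
      gcongr with b
      rw [sum_boole, filter_univ_mem]
      exact_mod_cast hn b
    _ = 2 * n := by
      rw [sum_const, nsmul_eq_mul]
      field_simp

variable [DecidableEq Y] {f : V → Y} {u : V}

theorem one_le_sum_of_collides {b : V} (h : Collides G U f b u) :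
    (1 : ℝ) ≤ ∑ x ∈ univ.erase u with f x = f u,
      if x ∈ G.neighborFinset b ∩ U then 1 else 0 := by
  obtain ⟨x, hxU, hbx, hxu, hfx⟩ := h
  have hx : x ∈ ({x ∈ univ.erase u | f x = f u} : Finset V) := by simp [hxu, hfx]
  simpa [hbx, hxU] using single_le_sum (f := fun x ↦
    if x ∈ G.neighborFinset b ∩ U then (1 : ℝ) else 0) (fun y _ ↦ by positivity) hx

theorem one_le_sum_spoilWeight_of_spoiled {T : Finset V} (h : Spoiled G U f u T) :
    1 ≤ ∑ x ∈ univ.erase u with f x = f u, spoilWeight G U T x := by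
  have hT : 0 < #T := by
    have := card_filter_le T fun b ↦ Collides G U f b u
    unfold Spoiled at h
    lia
  calc (1 : ℝ) ≤ 2 / #T * #{b ∈ T | Collides G U f b u} := by
        rw [div_mul_eq_mul_div, le_div_iff₀ (mod_cast hT), one_mul]
        exact_mod_cast h.le
    _ = 2 / #T * ∑ b ∈ T, if Collides G U f b u then 1 else 0 := by rw [sum_boole]
    _ ≤ 2 / #T * ∑ b ∈ T, ∑ x ∈ univ.erase u with f x = f u,
        if x ∈ G.neighborFinset b ∩ U then 1 else 0 := by
      gcongr with b
      split_ifs with hb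
      · exact one_le_sum_of_collides hb
      · positivity
    _ = ∑ x ∈ univ.erase u with f x = f u, spoilWeight G U T x := by
      simp only [spoilWeight]
      rw [← mul_sum, sum_comm]

theorem overloaded_of_defective {T : V → Y → Finset V} {w : V} (h : Defective G U T f w u) :
    Overloaded (fun u c x ↦ spoilWeight G U (T u c) x +
      if x ∈ G.neighborFinset w ∩ U then 1 else 0) f u := by
  rw [Overloaded, sum_add_distrib]
  rcases h with hspoiled | hcollides
  · exact le_add_of_le_of_nonneg (one_le_sum_spoilWeight_of_spoiled hspoiled) (by positivity)
  · exact le_add_of_nonneg_of_le (sum_nonneg fun x _ ↦ spoilWeight_nonneg _ _)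
      (one_le_sum_of_collides hcollides)

open Classical in
theorem dens_filter_exists_defective_le [Fintype Y] [Nonempty Y] {n : ℕ}
    (hn : ∀ b, #(G.neighborFinset b ∩ U) ≤ n) (T : V → Y → Finset V) (w : V) (Γ : Finset V)
    (S : Finset Y) (h : ℕ) :
    (({f | ∃ I ∈ Γ.powersetCard h, Set.InjOn f I ∧ ∀ u ∈ I, f u ∈ S ∧ Defective G U T f w u} :
        Finset (V → Y)).dens : ℝ) ≤
      (#Γ).choose h * (#S * (3 * n) / Fintype.card Y ^ 2) ^ h := by
  let ω (u : V) (c : Y) (x : V) : ℝ :=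
    spoilWeight G U (T u c) x + if x ∈ G.neighborFinset w ∩ U then 1 else 0
  have hω : ∀ u c x, 0 ≤ ω u c x := fun u c x ↦
    add_nonneg (spoilWeight_nonneg _ _) (by positivity)
  have hκ : ∀ u ∈ Γ, ∀ c, ∑ x, ω u c x ≤ 3 * n := fun u _ c ↦ by
    have hw : (#(G.neighborFinset w ∩ U) : ℝ) ≤ n := mod_cast hn w
    simp only [ω]
    rw [sum_add_distrib, sum_boole, filter_univ_mem]
    linarith [sum_spoilWeight_le hn (T u c)]
  have hsub : ({f | ∃ I ∈ Γ.powersetCard h, Set.InjOn f I ∧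
      ∀ u ∈ I, f u ∈ S ∧ Defective G U T f w u} : Finset (V → Y)) ⊆
      ({f | ∃ I ∈ Γ.powersetCard h, Set.InjOn f I ∧ ∀ u ∈ I, f u ∈ S ∧ Overloaded ω f u} :
        Finset (V → Y)) :=
    monotone_filter_right _ fun f _ ⟨I, hI, hinj, hf⟩ ↦
      ⟨I, hI, hinj, fun u hu ↦ ⟨(hf u hu).1, overloaded_of_defective (hf u hu).2⟩⟩
  exact le_trans (mod_cast dens_le_dens hsub) (dens_filter_exists_overloaded_le Γ h S hω hκ)

/-- The colourings for which a vertex `w` with available neighbours `Γ` may fail to have more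
than `r - h` non-defective neighbours coloured from `S`: they use at most `r` colours of `S` on
`Γ`, or some `h` distinctly coloured vertices of `Γ` with colours in `S` are all defective. -/
noncomputable def failureEvent [Fintype Y] (G : SimpleGraph V) [DecidableRel G.Adj]
    (U : Finset V) (T : V → Y → Finset V) (w : V) (Γ : Finset V) (S : Finset Y) (r h : ℕ) :
    Finset (V → Y) :=
  open Classical in
  ({f | #(Γ.image f ∩ S) ≤ r} : Finset (V → Y)) ∪
    ({f | ∃ I ∈ Γ.powersetCard h, Set.InjOn f I ∧ ∀ u ∈ I, f u ∈ S ∧ Defective G U T f w u} :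
      Finset (V → Y))

variable [Fintype Y] {T : V → Y → Finset V} {w : V} {Γ : Finset V} {S : Finset Y} {r h : ℕ}

theorem dependsOn_mem_failureEvent (hT : ∀ u c, T u c ⊆ G.neighborFinset u)
    (hΓ : Γ ⊆ G.neighborFinset w) :
    DependsOn (· ∈ failureEvent G U T w Γ S r h) (threeStepFinset G w : Set V) :=
    fun f g hfg ↦ by
  have hadj : ∀ u ∈ Γ, G.Adj w u := fun u hu ↦ (G.mem_neighborFinset w u).1 (hΓ hu)
  have heq : Set.EqOn f g Γ := fun u hu ↦ hfg u (mem_threeStepFinset_of_adj (hadj u hu))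
  simp only [failureEvent, mem_union, mem_filter_univ, image_congr heq, eq_iff_iff]
  refine or_congr_right (exists_congr fun I ↦ and_congr_right fun hI ↦ ?_)
  have hIΓ : I ⊆ Γ := (mem_powersetCard.1 hI).1
  refine and_congr (heq.mono (coe_subset.2 hIΓ)).injOn_iff (forall₂_congr fun u hu ↦ ?_)
  rw [heq (hIΓ hu)]
  exact and_congr_right fun _ ↦ iff_of_eq (dependsOn_defective hT (hadj u (hIΓ hu)) hfg)

theorem dens_failureEvent_le [Nonempty Y] {n : ℕ} (hn : ∀ b, #(G.neighborFinset b ∩ U) ≤ n)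
    (hr : r ≤ #S) :
    ((failureEvent G U T w Γ S r h).dens : ℝ) ≤
      (#S).choose r * ((Fintype.card Y - #S + r : ℝ) / Fintype.card Y) ^ #Γ +
        (#Γ).choose h * (#S * (3 * n) / Fintype.card Y ^ 2) ^ h :=
  le_trans (mod_cast dens_union_le _ _) (add_le_add (dens_filter_card_image_inter_le Γ hr)
    (dens_filter_exists_defective_le hn T w Γ S h))

theorem lt_card_filter_not_defective_add (hf : f ∉ failureEvent G U T w Γ S r h) :
    r < #{u ∈ Γ | f u ∈ S ∧ ¬ Defective G U T f w u} + h := by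
  simp only [failureEvent, mem_union, mem_filter_univ, not_or, not_le] at hf
  obtain ⟨hcolours, hdefective⟩ := hf
  obtain ⟨I₀, hI₀, hinj, himage⟩ := exists_subset_injOn_image_eq_of_surjOn (f := f)
    ({u ∈ Γ | f u ∈ S} : Finset V) (Γ.image f ∩ S) fun c hc ↦ by
      obtain ⟨u, hu, rfl⟩ := mem_image.1 (mem_inter.1 (mem_coe.1 hc)).1
      exact ⟨u, by simpa [hu] using (mem_inter.1 (mem_coe.1 hc)).2, rfl⟩
  have hcard : r < #I₀ := by rwa [← card_image_of_injOn hinj, himage]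
  have hgood : #{u ∈ I₀ | ¬ Defective G U T f w u} ≤
      #{u ∈ Γ | f u ∈ S ∧ ¬ Defective G U T f w u} := by
    rw [← filter_filter]
    exact card_le_card (filter_subset_filter _ hI₀)
  have hbad : #{u ∈ I₀ | Defective G U T f w u} < h := by
    by_contra! hle
    obtain ⟨I, hI, rfl⟩ := exists_subset_card_eq hle
    have hII₀ : I ⊆ I₀ := hI.trans (filter_subset _ _)
    refine hdefective ⟨I, mem_powersetCard.2 ⟨hII₀.trans (hI₀.trans (filter_subset _ _)), rfl⟩,
      hinj.mono (coe_subset.2 hII₀), fun u hu ↦ ?_⟩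
    exact ⟨(mem_filter.1 (hI₀ (hII₀ hu))).2, (mem_filter.1 (hI hu)).2⟩
  have := card_filter_add_card_filter_not (s := I₀) fun u ↦ Defective G U T f w u
  lia

theorem exists_forall_lt_card_filter_not_defective_add {ι : Type*} [Fintype ι] [Nonempty Y]
    {d n : ℕ} (hd0 : 0 < d) (hd : ∀ w, G.degree w ≤ d) (hn : ∀ b, #(G.neighborFinset b ∩ U) ≤ n)
    (hT : ∀ u c, T u c ⊆ G.neighborFinset u) {A : Finset V} {Γ : V → Finset V}
    (hΓ : ∀ w ∈ A, Γ w ⊆ G.neighborFinset w) {S : ι → Finset Y} {r : V → ℕ}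
    (hr : ∀ w ∈ A, ∀ i, r w ≤ #(S i)) {p : ℝ}
    (hp : ∀ w ∈ A, ∀ i,
      (#(S i)).choose (r w) * ((Fintype.card Y - #(S i) + r w : ℝ) / Fintype.card Y) ^ #(Γ w) +
        (#(Γ w)).choose h * (#(S i) * (3 * n) / Fintype.card Y ^ 2) ^ h ≤ p)
    (hpd : 4 * p * (d ^ 6 * Fintype.card ι) ≤ 1) :
    ∃ f : V → Y, ∀ w ∈ A, ∀ i,
      r w < #{u ∈ Γ w | f u ∈ S i ∧ ¬ Defective G U T f w u} + h := by
  rcases isEmpty_or_nonempty ι with _ | _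
  · exact ⟨fun _ ↦ Classical.arbitrary Y, fun _ _ i ↦ isEmptyElim i⟩
  rcases A.eq_empty_or_nonempty with rfl | ⟨w₀, hw₀⟩
  · exact ⟨fun _ ↦ Classical.arbitrary Y, fun w hw ↦ absurd hw (notMem_empty w)⟩
  let E (wi : V × ι) : Finset (V → Y) :=
    if wi.1 ∈ A then failureEvent G U T wi.1 (Γ wi.1) (S wi.2) (r wi.1) h else ∅
  have hE : ∀ w ∈ A, ∀ i, E (w, i) = failureEvent G U T w (Γ w) (S i) (r w) h :=
    fun w hw i ↦ if_pos hw
  have hdep : ∀ wi, DependsOn (· ∈ E wi) (threeStepFinset G wi.1 : Set V) := fun ⟨w, i⟩ ↦ by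
    by_cases hw : w ∈ A
    · rw [hE w hw]
      exact dependsOn_mem_failureEvent hT (hΓ w hw)
    · simpa [E, hw] using (dependsOn_const False).mono (Set.empty_subset _)
  have hdens : ∀ w ∈ A, ∀ i, ((E (w, i)).dens : ℝ) ≤ p := fun w hw i ↦ by
    rw [hE w hw]
    exact (dens_failureEvent_le hn (hr w hw i)).trans (hp w hw i)
  have hp0 : 0 ≤ p := le_trans (by positivity) (hdens w₀ hw₀ (Classical.arbitrary ι))
  obtain ⟨f, hf⟩ := exists_forall_notMem_of_four_mul_le_one (Δ := d ^ 6 * Fintype.card ι) hdep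
    (fun ⟨w, i⟩ ↦ by
      by_cases hw : w ∈ A
      · exact hdens w hw i
      · simpa [E, hw] using hp0)
    (fun ⟨w, i⟩ ↦ by
      rw [← card_univ (α := ι), ← univ_product_univ, filter_product_left fun w' ↦
        ¬ Disjoint (threeStepFinset G w) (threeStepFinset G w'), card_product]
      exact Nat.mul_le_mul_right _ (card_filter_not_disjoint_threeStepFinset_le hd w))
    (Nat.succ_le_of_lt (Nat.mul_pos (pow_pos hd0 6) Fintype.card_pos)) (mod_cast hpd)
  exact ⟨f, fun w hw i ↦ lt_card_filter_not_defective_add (hE w hw i ▸ hf (w, i))⟩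

theorem choose_mul_div_pow_le {m n t h : ℕ} (hm : 0 < m) (ht : t ≤ n) :
    (m.choose t : ℝ) * (t / m) ^ (t + h) ≤ Real.exp n * (n / m) ^ h :=
  calc (m.choose t : ℝ) * (t / m) ^ (t + h)
      ≤ (m : ℝ) ^ t / t.factorial * (t / m) ^ (t + h) := by
        gcongr
        exact Nat.choose_le_pow_div t m
    _ = (t : ℝ) ^ t / t.factorial * (t / m) ^ h := by
      rw [pow_add, div_pow]
      field_simp
    _ ≤ Real.exp n * (n / m) ^ h := by
      gcongr
      exact (Real.pow_div_factorial_le_exp t t.cast_nonneg t).trans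
        (Real.exp_le_exp.2 (mod_cast ht))

theorem choose_le_exp_of_le {g n h : ℕ} (hg : g ≤ n) : (g.choose h : ℝ) ≤ Real.exp n :=
  calc (g.choose h : ℝ) ≤ 2 ^ g := mod_cast Nat.choose_le_two_pow g h
    _ ≤ Real.exp 1 ^ g := by
      gcongr
      linarith [Real.add_one_le_exp (1 : ℝ)]
    _ = Real.exp g := by rw [← Real.exp_nat_mul, mul_one]
    _ ≤ Real.exp n := Real.exp_le_exp.2 (mod_cast hg)

theorem exists_forall_card_filter_spoiled_le [Nonempty Y] {d n : ℕ} (hd0 : 0 < d)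
    (hd : ∀ w, G.degree w ≤ d) (hn : ∀ b, #(G.neighborFinset b ∩ U) ≤ n)
    (hT : ∀ u c, T u c ⊆ G.neighborFinset u) (hnY : n ≤ Fintype.card Y)
    (hp : 8 * (Real.exp n * (3 * n / Fintype.card Y) ^ h) * d ^ 6 ≤ 1) :
    ∃ f : V → Y, ∀ w,
      #{u ∈ G.neighborFinset w ∩ U | Spoiled G U f u (T u (f u))} ≤ 2 * h := by
  obtain ⟨f, hf⟩ := exists_forall_lt_card_filter_not_defective_add (ι := Unit) (h := h)
    (S := fun _ ↦ univ) (A := {w | 2 * h < #(G.neighborFinset w ∩ U)})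
    (Γ := fun w ↦ G.neighborFinset w ∩ U) (r := fun w ↦ #(G.neighborFinset w ∩ U) - h)
    (p := 2 * (Real.exp n * (3 * n / Fintype.card Y) ^ h)) hd0 hd hn hT
    (fun w _ ↦ inter_subset_left)
    (fun w _ _ ↦ (Nat.sub_le _ _).trans ((hn w).trans hnY))
    (fun w hw _ ↦ by
      obtain ⟨t, ht⟩ := Nat.exists_eq_add_of_le' (show h ≤ #(G.neighborFinset w ∩ U) by
        have := (mem_filter.1 hw).2
        lia)
      have hw := hn w
      rw [ht] at hw ⊢
      have hcancel : (Fintype.card Y : ℝ) * (3 * n) / Fintype.card Y ^ 2 =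
          3 * n / Fintype.card Y := by field_simp
      rw [card_univ, Nat.add_sub_cancel, sub_self, zero_add, two_mul, hcancel]
      refine add_le_add ((choose_mul_div_pow_le (n := n) Fintype.card_pos (by lia)).trans ?_) ?_
      · gcongr
        linarith [n.cast_nonneg (α := ℝ)]
      · gcongr
        exact choose_le_exp_of_le hw)
    (by
      rw [Fintype.card_unit, Nat.cast_one, mul_one]
      linarith)
  refine ⟨f, fun w ↦ ?_⟩
  by_cases hw : 2 * h < #(G.neighborFinset w ∩ U)
  · have hmany := hf w (by simpa using hw) ()
    have hsub : #{u ∈ G.neighborFinset w ∩ U | f u ∈ univ ∧ ¬ Defective G U T f w u} ≤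
        #{u ∈ G.neighborFinset w ∩ U | ¬ Spoiled G U f u (T u (f u))} :=
      card_le_card (monotone_filter_right _ fun u _ hu hsp ↦ hu.2 (Or.inl hsp))
    have := card_filter_add_card_filter_not (s := G.neighborFinset w ∩ U)
      fun u ↦ Spoiled G U f u (T u (f u))
    lia
  · exact (card_filter_le _ _).trans (not_lt.1 hw)

end DefectiveVertices

section Recolouring

variable {V X : Type*} {G : SimpleGraph V} {U W : Finset V} {f g : V → X} {b u : V}

theorem collides_comp_iff {Y : Type*} {e : X → Y} (he : e.Injective) :
    Collides G U (e ∘ f) b u ↔ Collides G U f b u := by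
  simp only [Collides, Function.comp_apply, he.eq_iff]

theorem spoiled_comp_iff {Y : Type*} [DecidableEq V] [DecidableEq X] [DecidableEq Y]
    [DecidableRel G.Adj] {e : X → Y} (he : e.Injective) {T : Finset V} :
    Spoiled G U (e ∘ f) u T ↔ Spoiled G U f u T := by
  simp only [Spoiled, collides_comp_iff he]

variable [DecidableEq V] {P Q : Finset X}

theorem collides_of_collides_piecewise_of_notMem (hPQ : Disjoint P Q) (hf : ∀ u ∈ U, f u ∈ P)
    (hg : ∀ u ∈ W, g u ∈ Q) (hu : u ∈ U) (huW : u ∉ W)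
    (h : Collides G U (W.piecewise g f) b u) : Collides G U f b u := by
  obtain ⟨x, hxU, hbx, hxu, hx⟩ := h
  rw [piecewise_eq_of_notMem _ _ _ huW] at hx
  by_cases hxW : x ∈ W
  · rw [piecewise_eq_of_mem _ _ _ hxW] at hx
    exact absurd (hx ▸ hg x hxW) (disjoint_left.1 hPQ (hf u hu))
  · rw [piecewise_eq_of_notMem _ _ _ hxW] at hx
    exact ⟨x, hxU, hbx, hxu, hx⟩

theorem collides_of_collides_piecewise_of_mem (hPQ : Disjoint P Q) (hf : ∀ u ∈ U, f u ∈ P)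
    (hg : ∀ u ∈ W, g u ∈ Q) (huW : u ∈ W) (h : Collides G U (W.piecewise g f) b u) :
    Collides G W g b u := by
  obtain ⟨x, hxU, hbx, hxu, hx⟩ := h
  rw [piecewise_eq_of_mem _ _ _ huW] at hx
  by_cases hxW : x ∈ W
  · rw [piecewise_eq_of_mem _ _ _ hxW] at hx
    exact ⟨x, hxW, hbx, hxu, hx⟩
  · rw [piecewise_eq_of_notMem _ _ _ hxW] at hx
    exact absurd (hx ▸ hg u huW) (disjoint_left.1 hPQ (hf x hxU))

variable [DecidableEq X] [DecidableRel G.Adj]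

theorem Spoiled.mono {U' T : Finset V}
    (hfg : ∀ b ∈ T, Collides G U f b u → Collides G U' g b u) (h : Spoiled G U f u T) :
    Spoiled G U' g u T :=
  h.trans_le (Nat.mul_le_mul_left 2 (card_le_card (monotone_filter_right _ hfg)))

theorem card_le_two_mul_card_filter_not_collides {T : Finset V} (h : ¬ Spoiled G U f u T) :
    #T ≤ 2 * #{b ∈ T | ¬ Collides G U f b u} := by
  have := card_filter_add_card_filter_not (s := T) fun b ↦ Collides G U f b u
  unfold Spoiled at h
  lia

variable (G) in
/-- The vertices of `U` can be coloured from the palette `P` so that none is spoiled for its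
target set. -/
def HasUnspoiledColouring (T : V → X → Finset V) (U : Finset V) (P : Finset X) : Prop :=
  ∃ f : V → X, (∀ u ∈ U, f u ∈ P) ∧ ∀ u ∈ U, ¬ Spoiled G U f u (T u (f u))

variable {T : V → X → Finset V}

theorem not_spoiled_piecewise (hPQ : Disjoint P Q) (hf : ∀ u ∈ U, f u ∈ P)
    (hW : ∀ u ∈ U, u ∉ W → ¬ Spoiled G U f u (T u (f u))) (hg : ∀ u ∈ W, g u ∈ Q)
    (hgW : ∀ u ∈ W, ¬ Spoiled G W g u (T u (g u))) (hu : u ∈ U) :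
    ¬ Spoiled G U (W.piecewise g f) u (T u (W.piecewise g f u)) := fun h ↦ by
  by_cases huW : u ∈ W
  · rw [piecewise_eq_of_mem _ _ _ huW] at h
    exact hgW u huW (h.mono fun b _ ↦ collides_of_collides_piecewise_of_mem hPQ hf hg huW)
  · rw [piecewise_eq_of_notMem _ _ _ huW] at h
    exact hW u hu huW (h.mono fun b _ ↦ collides_of_collides_piecewise_of_notMem hPQ hf hg hu huW)

theorem HasUnspoiledColouring.union (hPQ : Disjoint P Q) (hf : ∀ u ∈ U, f u ∈ P)
    (h : HasUnspoiledColouring G T {u ∈ U | Spoiled G U f u (T u (f u))} Q) :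
    HasUnspoiledColouring G T U (P ∪ Q) := by
  obtain ⟨g, hgQ, hg⟩ := h
  refine ⟨_, fun u hu ↦ ?_, fun u hu ↦ not_spoiled_piecewise hPQ hf
    (fun u hu huW hsp ↦ huW (mem_filter.2 ⟨hu, hsp⟩)) hgQ hg hu⟩
  by_cases huW : u ∈ ({u ∈ U | Spoiled G U f u (T u (f u))} : Finset V)
  · rw [piecewise_eq_of_mem _ _ _ huW]
    exact mem_union_right _ (hgQ u huW)
  · rw [piecewise_eq_of_notMem _ _ _ huW]
    exact mem_union_left _ (hf u hu)

end Recolouring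

section UnspoiledColouring

variable {V X : Type*} [Fintype V] [DecidableEq V] {G : SimpleGraph V}
  [DecidableRel G.Adj] {T : V → X → Finset V} {U : Finset V} {P : Finset X} {d n : ℕ}

theorem exists_injOn_neighborSets (hd : ∀ w, G.degree w ≤ d)
    (hn : ∀ b, #(G.neighborFinset b ∩ U) ≤ n) (hP : d * n < #P) :
    ∃ f : V → X, (∀ u ∈ U, f u ∈ P) ∧
      ∀ u ∈ U, ∀ x ∈ U, ∀ b, G.Adj b u → G.Adj b x → f u = f x → u = x := by
  classical
  suffices ∀ W ⊆ U, ∃ f : V → X, (∀ u ∈ W, f u ∈ P) ∧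
      ∀ u ∈ W, ∀ x ∈ W, ∀ b, G.Adj b u → G.Adj b x → f u = f x → u = x from this U subset_rfl
  intro W
  induction W using Finset.induction_on with
  | empty =>
    obtain ⟨c, -⟩ := card_pos.1 (Nat.zero_lt_of_lt hP)
    exact fun _ ↦ ⟨fun _ ↦ c, by simp⟩
  | insert v W hv ih =>
    intro hW
    obtain ⟨f, hfP, hf⟩ := ih ((subset_insert _ _).trans hW)
    let forbidden := ((G.neighborFinset v).biUnion fun b ↦ G.neighborFinset b ∩ U).image f
    have hcard : #forbidden < #P := by
      refine (card_image_le.trans ?_).trans_lt hP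
      exact (card_biUnion_le_card_mul _ _ _ fun b _ ↦ hn b).trans (Nat.mul_le_mul_right _ (hd v))
    obtain ⟨c, hcP, hc⟩ := exists_mem_notMem_of_card_lt_card hcard
    have hfresh : ∀ x ∈ W, ∀ b, G.Adj b v → G.Adj b x → f x ≠ c := fun x hx b hbv hbx hfx ↦ by
      refine hc (mem_image.2 ⟨x, mem_biUnion.2 ⟨b, ?_, ?_⟩, hfx⟩)
      · exact (G.mem_neighborFinset v b).2 hbv.symm
      · exact mem_inter.2 ⟨(G.mem_neighborFinset b x).2 hbx, hW (mem_insert_of_mem hx)⟩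
    have hold : ∀ x ∈ W, Function.update f v c x = f x := fun x hx ↦
      Function.update_of_ne (ne_of_mem_of_not_mem hx hv) _ _
    have hnew : Function.update f v c v = c := Function.update_self ..
    refine ⟨Function.update f v c, ?_, ?_⟩
    · rw [forall_mem_insert, hnew]
      exact ⟨hcP, fun u hu ↦ (hold u hu).symm ▸ hfP u hu⟩
    · simp only [forall_mem_insert, hnew]
      refine ⟨⟨fun _ _ _ _ ↦ trivial, fun x hx b hbv hbx h ↦ ?_⟩, fun u hu ↦
        ⟨fun b hbu hbv h ↦ ?_, fun x hx b hbu hbx h ↦ ?_⟩⟩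
      · exact absurd (hold x hx ▸ h.symm) (hfresh x hx b hbv hbx)
      · exact absurd (hold u hu ▸ h) (hfresh u hu b hbv hbu)
      · exact hf u hu x hx b hbu hbx (by rwa [hold u hu, hold x hx] at h)

variable [DecidableEq X]

theorem hasUnspoiledColouring_of_mul_lt_card (hd : ∀ w, G.degree w ≤ d)
    (hn : ∀ b, #(G.neighborFinset b ∩ U) ≤ n) (hT : ∀ u c, T u c ⊆ G.neighborFinset u)
    (hP : d * n < #P) : HasUnspoiledColouring G T U P := by
  obtain ⟨f, hfP, hf⟩ := exists_injOn_neighborSets hd hn hP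
  refine ⟨f, hfP, fun u hu hsp ↦ ?_⟩
  have hempty : ({b ∈ T u (f u) | Collides G U f b u} : Finset V) = ∅ :=
    filter_eq_empty_iff.2 fun b hb ⟨x, hxU, hbx, hxu, hfx⟩ ↦
      hxu (hf x hxU u hu b hbx ((G.mem_neighborFinset u b).1 (hT _ _ hb)).symm hfx)
  simp [Spoiled, hempty] at hsp

theorem hasUnspoiledColouring_of_forall_sparse {m h : ℕ} (hd0 : 0 < d)
    (hd : ∀ w, G.degree w ≤ d) (hn : ∀ b, #(G.neighborFinset b ∩ U) ≤ n)
    (hT : ∀ u c, T u c ⊆ G.neighborFinset u) (hm0 : 0 < m) (hmP : m ≤ #P) (hnm : n ≤ m)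
    (hp : 8 * (Real.exp n * (3 * n / m) ^ h) * d ^ 6 ≤ 1)
    (hsparse : ∀ W : Finset V, (∀ b, #(G.neighborFinset b ∩ W) ≤ 2 * h) → ∀ Q : Finset X,
      #P ≤ #Q + m → HasUnspoiledColouring G T W Q) :
    HasUnspoiledColouring G T U P := by
  obtain ⟨P₁, hP₁, rfl⟩ := exists_subset_card_eq hmP
  have : Nonempty P₁ := (card_pos.1 hm0).to_subtype
  obtain ⟨f, hf⟩ := exists_forall_card_filter_spoiled_le (Y := P₁) (T := fun u c ↦ T u c) (h := h)
    hd0 hd hn (fun u c ↦ hT u c) (by rwa [Fintype.card_coe]) (by rwa [Fintype.card_coe])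
  rw [← union_sdiff_of_subset hP₁]
  refine HasUnspoiledColouring.union (f := Subtype.val ∘ f) disjoint_sdiff (fun u _ ↦ (f u).2)
    (hsparse _ (fun b ↦ ?_) _ (by rw [card_sdiff_add_card_eq_card hP₁]))
  simp only [spoiled_comp_iff Subtype.val_injective]
  rw [inter_filter]
  exact hf b

theorem eight_mul_exp_mul_pow_28_le_one (hd : 16 ≤ d) (hlog : 21 * Real.log d ≤ √d)
    (hn : n < 7 * Real.log d) : 8 * (Real.exp n * (3 * n / d) ^ 28) * d ^ 6 ≤ 1 := by
  have hd16 : (16 : ℝ) ≤ d := mod_cast hd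
  have hd0 : (0 : ℝ) < d := by linarith
  have hexp : Real.exp n ≤ (d : ℝ) ^ 7 :=
    calc Real.exp n ≤ Real.exp ((7 : ℕ) * Real.log d) := Real.exp_le_exp.2 hn.le
      _ = (d : ℝ) ^ 7 := by rw [Real.exp_nat_mul, Real.exp_log hd0]
  have hpow : (3 * n / d : ℝ) ^ 28 ≤ 1 / (d : ℝ) ^ 14 :=
    calc (3 * n / d : ℝ) ^ 28 ≤ (√d / d) ^ 28 := by
          gcongr
          linarith
      _ = (√d ^ 2) ^ 14 / (d : ℝ) ^ 28 := by rw [div_pow, ← pow_mul]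
      _ = 1 / (d : ℝ) ^ 14 := by
        rw [Real.sq_sqrt hd0.le]
        field_simp
  calc 8 * (Real.exp n * (3 * n / d) ^ 28) * (d : ℝ) ^ 6
      ≤ 8 * ((d : ℝ) ^ 7 * (1 / (d : ℝ) ^ 14)) * (d : ℝ) ^ 6 := by gcongr
    _ = 8 / (d : ℝ) := by field_simp
    _ ≤ 1 := by
      rw [div_le_one hd0]
      linarith

theorem eight_mul_exp_mul_pow_div_eight_le_one (hd : 8 ≤ d) (hn8 : 8 ≤ n)
    (hn : 7 * Real.log d ≤ n) :
    8 * (Real.exp n * (3 * n / (3 ^ 33 * n : ℕ)) ^ (n / 8)) * d ^ 6 ≤ 1 := by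
  have hd8 : (8 : ℝ) ≤ d := mod_cast hd
  have hn0 : (n : ℝ) ≠ 0 := by positivity
  have hbase : (3 * n / (3 ^ 33 * n : ℕ) : ℝ) = 3⁻¹ ^ 32 := by
    push_cast
    field_simp
    norm_num
  have hpow : (3⁻¹ ^ 32 : ℝ) ^ (n / 8) ≤ Real.exp (-n) ^ 2 :=
    calc (3⁻¹ ^ 32 : ℝ) ^ (n / 8) = 3⁻¹ ^ (32 * (n / 8)) := (pow_mul _ _ _).symm
      _ ≤ 3⁻¹ ^ (n * 2) := pow_le_pow_of_le_one (by norm_num) (by norm_num) (by lia)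
      _ ≤ Real.exp (-1) ^ (n * 2) := by
        gcongr
        rw [Real.exp_neg]
        exact inv_anti₀ (Real.exp_pos 1) (by linarith [Real.exp_one_lt_d9])
      _ = Real.exp (-n) ^ 2 := by rw [pow_mul, ← Real.exp_nat_mul _ n, mul_neg_one]
  have hd7 : 8 * (d : ℝ) ^ 6 ≤ Real.exp n :=
    calc 8 * (d : ℝ) ^ 6 ≤ d * (d : ℝ) ^ 6 := by gcongr
      _ = Real.exp ((7 : ℕ) * Real.log d) := by
        rw [Real.exp_nat_mul, Real.exp_log (by linarith)]
        ring
      _ ≤ Real.exp n := Real.exp_le_exp.2 hn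
  calc 8 * (Real.exp n * (3 * n / (3 ^ 33 * n : ℕ)) ^ (n / 8)) * d ^ 6
      = Real.exp n * (3⁻¹ ^ 32) ^ (n / 8) * (8 * d ^ 6) := by
        rw [hbase]
        ring
    _ ≤ Real.exp n * Real.exp (-n) ^ 2 * Real.exp n := by gcongr
    _ = 1 := by
      rw [Real.exp_neg]
      field_simp

-- While `n ≥ 7 log d`, a random colouring from `3 ^ 33 * n` fresh colours divides by four the
-- number of spoiled vertices in a neighbourhood; the palettes of all rounds have total size `O(d)`.
theorem hasUnspoiledColouring_of_card_inter_le (hd16 : 16 ≤ d) (hlog : 21 * Real.log d ≤ √d)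
    (hd : ∀ w, G.degree w ≤ d) (hT : ∀ u c, T u c ⊆ G.neighborFinset u)
    (hn : ∀ b, #(G.neighborFinset b ∩ U) ≤ n) (hP : 2 * 3 ^ 33 * n + 60 * d ≤ #P) :
    HasUnspoiledColouring G T U P := by
  have hd0 : 0 < d := by lia
  induction n using Nat.strong_induction_on generalizing U P with
  | _ n ih =>
  rcases lt_or_ge (n : ℝ) (7 * Real.log d) with hsmall | hlarge
  · have hnd : n ≤ d := by
      have hsqrt : √d ≤ d := Real.sqrt_le_self_iff.2 (.inr (mod_cast hd0))
      exact_mod_cast (show (n : ℝ) ≤ d by linarith [n.cast_nonneg (α := ℝ)])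
    refine hasUnspoiledColouring_of_forall_sparse hd0 hd hn hT hd0 (by lia) hnd
      (eight_mul_exp_mul_pow_28_le_one hd16 hlog hsmall) fun W hW Q hQ ↦
        hasUnspoiledColouring_of_mul_lt_card hd hW hT (by lia)
  · have hn8 : 8 ≤ n := by
      have hlog2 : Real.exp 2 ≤ d := by
        have hd16 : (16 : ℝ) ≤ d := mod_cast hd16
        have : Real.exp 2 = Real.exp 1 ^ 2 := by rw [← Real.exp_nat_mul]; norm_num
        nlinarith [Real.exp_one_lt_d9, Real.exp_pos 1]
      rw [← Real.le_log_iff_exp_le (mod_cast hd0)] at hlog2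
      exact_mod_cast (show (8 : ℝ) ≤ n by linarith)
    exact hasUnspoiledColouring_of_forall_sparse hd0 hd hn hT (m := 3 ^ 33 * n) (by lia) (by lia)
      (by lia) (eight_mul_exp_mul_pow_div_eight_le_one (by lia) hn8 hlarge) fun W hW Q hQ ↦
        ih _ (by lia) hW (by lia)

theorem hasUnspoiledColouring_of_mul_le_card (hd16 : 16 ≤ d) (hlog : 21 * Real.log d ≤ √d)
    (hd : ∀ w, G.degree w ≤ d) (hT : ∀ u c, T u c ⊆ G.neighborFinset u)
    (hP : (2 * 3 ^ 33 + 60) * d ≤ #P) : HasUnspoiledColouring G T U P :=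
  hasUnspoiledColouring_of_card_inter_le hd16 hlog hd hT
    (fun b ↦ (card_le_card inter_subset_left).trans (hd b)) (by lia)

end UnspoiledColouring

section Estimates

variable {d q h m s g : ℕ}

theorem choose_le_exp_one_mul_div_pow {n k : ℕ} (hk : 0 < k) :
    (n.choose k : ℝ) ≤ (Real.exp 1 * n / k) ^ k :=
  calc (n.choose k : ℝ) ≤ (n : ℝ) ^ k / k.factorial := Nat.choose_le_pow_div k n
    _ = (n / k : ℝ) ^ k * ((k : ℝ) ^ k / k.factorial) := by
      rw [div_pow]
      field_simp
    _ ≤ (n / k : ℝ) ^ k * Real.exp k := by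
      gcongr
      exact Real.pow_div_factorial_le_exp k k.cast_nonneg k
    _ = (n / k * Real.exp 1 : ℝ) ^ k := by rw [mul_pow, ← Real.exp_nat_mul, mul_one]
    _ = (Real.exp 1 * n / k) ^ k := by ring

theorem choose_two_mul_le_exp (hh : 0 < h) (hs : s ≤ 2400000000 * h) :
    (s.choose (2 * h) : ℝ) ≤ Real.exp (46 * h) := by
  have hexp22 : (1200000000 : ℝ) ≤ Real.exp 1 ^ 22 :=
    calc (1200000000 : ℝ) ≤ 2.7 ^ 22 := by norm_num
      _ ≤ Real.exp 1 ^ 22 := by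
        gcongr
        linarith [Real.exp_one_gt_d9]
  have hratio : (s : ℝ) / (2 * h : ℕ) ≤ 1200000000 := by
    rw [div_le_iff₀ (by positivity)]
    exact_mod_cast (by lia : s ≤ 1200000000 * (2 * h))
  calc (s.choose (2 * h) : ℝ) ≤ (Real.exp 1 * s / (2 * h : ℕ)) ^ (2 * h) :=
        choose_le_exp_one_mul_div_pow (by lia)
    _ = (Real.exp 1 * (s / (2 * h : ℕ))) ^ (2 * h) := by rw [mul_div_assoc]
    _ ≤ (Real.exp 1 * Real.exp 1 ^ 22) ^ (2 * h) := by
      gcongr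
      exact hratio.trans hexp22
    _ = Real.exp (46 * h) := by
      rw [← pow_succ', ← pow_mul, ← Real.exp_nat_mul]
      congr 1
      push_cast
      ring

theorem div_pow_le_exp_neg (hm : 0 < m) (hs : 20 * h ≤ s) (hsq : m ≤ 2 * s * q)
    (hqd : 4000 * q * h ≤ d) (hdg : d ≤ 4 * g) (hsm : s ≤ m) :
    ((m - s + (2 * h : ℕ) : ℝ) / m) ^ g ≤ Real.exp (-(200 * h)) := by
  have hm0 : (0 : ℝ) < m := mod_cast hm
  have hsm : (s : ℝ) ≤ m := mod_cast hsm
  have hbase : (m - s + (2 * h : ℕ) : ℝ) / m ≤ Real.exp (-((s - 2 * h) / m)) := by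
    refine le_of_eq_of_le ?_ (Real.one_sub_le_exp_neg ((s - 2 * h : ℝ) / m))
    push_cast
    field_simp
    ring
  have hexponent : (200 * h : ℝ) ≤ g * ((s - 2 * h) / m) := by
    rw [← mul_div_assoc, le_div_iff₀ hm0]
    have hs : (s : ℝ) * (9 / 10) ≤ s - 2 * h := by
      have : (20 * h : ℝ) ≤ s := mod_cast hs
      linarith
    have hg : (1000 * q * h : ℝ) ≤ g := by
      have : (4000 * q * h : ℝ) ≤ 4 * g := mod_cast hqd.trans hdg
      linarith
    calc (200 * h : ℝ) * m ≤ 200 * h * (2 * s * q) := by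
          gcongr
          exact_mod_cast hsq
      _ = 400 * (q * h * s) := by ring
      _ ≤ 900 * (q * h * s) := by gcongr; norm_num
      _ = 1000 * q * h * (s * (9 / 10)) := by ring
      _ ≤ g * (s - 2 * h) := by gcongr
  calc ((m - s + (2 * h : ℕ) : ℝ) / m) ^ g ≤ Real.exp (-((s - 2 * h) / m)) ^ g := by
        have : (0 : ℝ) ≤ m - s := by linarith
        gcongr
    _ = Real.exp (-(g * ((s - 2 * h) / m))) := by rw [← Real.exp_nat_mul, mul_neg]
    _ ≤ Real.exp (-(200 * h)) := Real.exp_le_exp.2 (neg_le_neg hexponent)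

theorem choose_mul_pow_le_half_pow (hq : 0 < q) (hh : 0 < h) (hdq : d ≤ 8000 * q * h)
    (hm : 0 < m) (hdm : 150000 * d ≤ m) (hsq : s * q ≤ m) (hg : g ≤ d) :
    (g.choose h : ℝ) * (s * (3 * d) / m ^ 2) ^ h ≤ (1 / 2) ^ h := by
  have hsd : (s : ℝ) * d ≤ 8000 * h * m := by
    suffices s * d * q ≤ 8000 * h * m * q from mod_cast Nat.le_of_mul_le_mul_right this hq
    calc s * d * q = s * q * d := by ring
      _ ≤ m * (8000 * q * h) := by gcongr
      _ = 8000 * h * m * q := by ring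
  have heg : Real.exp 1 * g ≤ 3 * d := by
    gcongr
    linarith [Real.exp_one_lt_d9]
  calc (g.choose h : ℝ) * (s * (3 * d) / m ^ 2) ^ h
      ≤ (Real.exp 1 * g / h) ^ h * (s * (3 * d) / m ^ 2) ^ h := by
        gcongr
        exact choose_le_exp_one_mul_div_pow hh
    _ = (Real.exp 1 * g / h * (s * (3 * d) / m ^ 2)) ^ h := (mul_pow _ _ _).symm
    _ ≤ (1 / 2) ^ h := by
      gcongr
      rw [div_mul_div_comm, div_le_div_iff₀ (by positivity) (by norm_num)]
      calc Real.exp 1 * g * (s * (3 * d)) * 2 = Real.exp 1 * g * (s * d) * 6 := by ring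
        _ ≤ 3 * d * (8000 * h * m) * 6 := by gcongr
        _ = 144000 * d * (h * m) := by ring
        _ ≤ m * (h * m) := by
          gcongr
          exact_mod_cast (by lia : 144000 * d ≤ m)
        _ = 1 * (h * m ^ 2) := by ring

end Estimates

section BalancedPalette

variable {X : Type*} [Fintype X]

/-- `P` is a palette of `Θ(d)` colours in which every colour `y` has about `#P / q` partners, where
the expected number `Θ(d / q)` of neighbours with a partner colour of `y` that a vertex of degree
`d` sees is a large multiple of `h`, and `h` is large enough for the local lemma to provide `h` of
them at every vertex. -/
structure IsBalancedPalette (R : X → X → Prop) [DecidableRel R] (P : Finset X) (d q h : ℕ) :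
    Prop where
  q_pos : 0 < q
  h_pos : 0 < h
  mul_le : 4000 * q * h ≤ d
  le_mul : d ≤ 8000 * q * h
  mul_le_card : 150000 * d ≤ #P
  card_le_mul : #P ≤ 300000 * d
  partners_mul_le : ∀ y, #{x ∈ P | R x y} * q ≤ #P
  le_partners_mul : ∀ y, #P ≤ 2 * #{x ∈ P | R x y} * q
  mul_le_two_pow : 8 * (d ^ 6 * Fintype.card X) ≤ 2 ^ h

namespace IsBalancedPalette

variable {R : X → X → Prop} [DecidableRel R] {P : Finset X} {d q h : ℕ}

theorem d_pos (hP : IsBalancedPalette R P d q h) : 0 < d :=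
  lt_of_lt_of_le (mul_pos (mul_pos (by norm_num) hP.q_pos) hP.h_pos) hP.mul_le

theorem thousand_mul_le_card_partners (hP : IsBalancedPalette R P d q h) (y : X) :
    1000 * h ≤ #{x ∈ P | R x y} := by
  refine Nat.le_of_mul_le_mul_right ?_ hP.q_pos
  have := hP.le_partners_mul y
  have := hP.mul_le
  have := hP.mul_le_card
  lia

theorem card_partners_le (hP : IsBalancedPalette R P d q h) (y : X) :
    #{x ∈ P | R x y} ≤ 2400000000 * h := by
  refine Nat.le_of_mul_le_mul_right ?_ hP.q_pos
  have := hP.partners_mul_le y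
  have := hP.le_mul
  have := hP.card_le_mul
  lia

theorem failure_bound (hP : IsBalancedPalette R P d q h) (y : X) {g : ℕ} (hdg : d ≤ 4 * g)
    (hgd : g ≤ d) :
    (#{x ∈ P | R x y}).choose (2 * h) * ((#P - #{x ∈ P | R x y} + (2 * h : ℕ) : ℝ) / #P) ^ g +
      g.choose h * (#{x ∈ P | R x y} * (3 * d) / #P ^ 2) ^ h ≤ 2 * (1 / 2) ^ h := by
  have hpos : 0 < #P := by
    have := hP.d_pos
    have := hP.mul_le_card
    lia
  rw [two_mul ((1 / 2 : ℝ) ^ h)]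
  refine add_le_add ?_ (choose_mul_pow_le_half_pow hP.q_pos hP.h_pos hP.le_mul hpos
    hP.mul_le_card (hP.partners_mul_le y) hgd)
  have hpartners := hP.thousand_mul_le_card_partners y
  have hsub : #{x ∈ P | R x y} ≤ #P := card_filter_le _ _
  calc _ ≤ Real.exp (46 * h) * Real.exp (-(200 * h)) := by
        have : (0 : ℝ) ≤ #P - #{x ∈ P | R x y} := sub_nonneg.2 (mod_cast hsub)
        gcongr
        · exact choose_two_mul_le_exp hP.h_pos (hP.card_partners_le y)
        · exact div_pow_le_exp_neg hpos (by lia) (hP.le_partners_mul y) hP.mul_le hdg hsub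
    _ = Real.exp (-154) ^ h := by
      rw [← Real.exp_add, ← Real.exp_nat_mul]
      ring_nf
    _ ≤ (1 / 2) ^ h := by
      gcongr
      rw [Real.exp_neg, one_div]
      exact inv_anti₀ two_pos (by linarith [Real.add_one_le_exp (154 : ℝ)])

variable {V : Type*} [Fintype V] [DecidableEq V] [DecidableEq X] {G : SimpleGraph V}
  [DecidableRel G.Adj]

theorem exists_colouring (hP : IsBalancedPalette R P d q h) (hd : ∀ w, G.degree w ≤ d)
    (U : Finset V) {T : V → X → Finset V} (hT : ∀ u c, T u c ⊆ G.neighborFinset u)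
    {A : Finset V} {Γ : V → Finset V} (hΓ : ∀ w ∈ A, Γ w ⊆ G.neighborFinset w)
    (hdΓ : ∀ w ∈ A, d ≤ 4 * #(Γ w)) :
    ∃ f : V → X, (∀ u, f u ∈ P) ∧
      ∀ w ∈ A, ∀ y, h ≤ #{u ∈ Γ w | R (f u) y ∧ ¬ Defective G U T f w u} := by
  have : Nonempty P := (card_pos.1 (by have := hP.d_pos; have := hP.mul_le_card; lia)).to_subtype
  let S (y : X) : Finset P := {x | R x y}
  have hS : ∀ y, #(S y) = #{x ∈ P | R x y} := fun y ↦ by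
    simp only [S]
    rw [univ_eq_attach, filter_attach (R · y), card_map, card_attach]
  have hlocal : 4 * (2 * (1 / 2) ^ h) * ((d : ℝ) ^ 6 * Fintype.card X) ≤ 1 :=
    calc 4 * (2 * (1 / 2) ^ h) * ((d : ℝ) ^ 6 * Fintype.card X)
        = (8 * (d ^ 6 * Fintype.card X) : ℕ) / 2 ^ h := by
          rw [one_div_pow]
          push_cast
          ring
      _ ≤ 1 := div_le_one_of_le₀ (mod_cast hP.mul_le_two_pow) (by positivity)
  obtain ⟨f, hf⟩ := exists_forall_lt_card_filter_not_defective_add (Y := P) (U := U) (S := S)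
    (T := fun u c ↦ T u c) (r := fun _ ↦ 2 * h) (h := h) hP.d_pos hd
    (fun b ↦ (card_le_card inter_subset_left).trans (hd b)) (fun u c ↦ hT u c) hΓ
    (fun w _ y ↦ by
      rw [hS]
      have := hP.thousand_mul_le_card_partners y
      lia)
    (fun w hw y ↦ by
      rw [hS, Fintype.card_coe]
      exact hP.failure_bound y (hdΓ w hw) ((card_le_card (hΓ w hw)).trans (hd w))) hlocal
  refine ⟨Subtype.val ∘ f, fun u ↦ (f u).2, fun w hw y ↦ ?_⟩
  have := hf w hw y
  simp only [Defective, spoiled_comp_iff Subtype.val_injective,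
    collides_comp_iff Subtype.val_injective]
  simp only [S, mem_filter_univ, Defective] at this
  simp only [Function.comp_apply]
  lia

end IsBalancedPalette

end BalancedPalette

section RainbowSubgraph

variable {V X : Type*} [Fintype V] (G : SimpleGraph V) (R : X → X → Prop) [Std.Symm R]
  (χ : V → X)

/-- The edges of `G` whose colours are related by `R` and neither of whose ends shares its colour
with another `G`-neighbour of the opposite end. The colouring is then a homomorphism into `R` that
is injective on neighbourhoods. -/
def rainbowSubgraph : SimpleGraph V where
  Adj u v := G.Adj u v ∧ R (χ u) (χ v) ∧ ¬ Collides G univ χ u v ∧ ¬ Collides G univ χ v u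
  symm := ⟨fun _ _ h ↦ ⟨h.1.symm, symm_of R h.2.1, h.2.2.2, h.2.2.1⟩⟩
  loopless := ⟨fun _ h ↦ h.1.ne rfl⟩

theorem rainbowSubgraph_le : rainbowSubgraph G R χ ≤ G := fun _ _ h ↦ h.1

variable {G R χ}

theorem rainbowSubgraph_injOn_neighborSet (u : V) :
    Set.InjOn χ ((rainbowSubgraph G R χ).neighborSet u) := fun v hv _ hv' hχ ↦
  by_contra fun hne ↦ hv'.2.2.1 ⟨v, mem_univ v, hv.1, hne, hχ⟩

theorem card_le_deg_rainbowSubgraph {u : V} {T : Finset V}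
    (hT : ∀ v ∈ T, (rainbowSubgraph G R χ).Adj u v) : #T ≤ deg (rainbowSubgraph G R χ) u := by
  rw [deg, ← Set.ncard_coe_finset]
  exact Set.ncard_le_ncard hT (Set.toFinite _)

theorem not_containsCopy_rainbowSubgraph {a b : ℕ} (ha : 0 < a) (hb : 0 < b)
    (hfree : ∀ x : Fin a → X, x.Injective → ∀ W : Finset X, (∀ w ∈ W, ∀ i, R (x i) w) → #W < b) :
    ¬ ContainsCopy (completeBipartiteGraph (Fin a) (Fin b)) (rainbowSubgraph G R χ) := by
  classical
  rintro ⟨f, hf⟩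
  have hadj (i : Fin a) (j : Fin b) :
      (rainbowSubgraph G R χ).Adj (f (Sum.inl i)) (f (Sum.inr j)) := f.map_rel (by simp)
  have hleft : Function.Injective fun i ↦ χ (f (Sum.inl i)) := fun i i' h ↦
    Sum.inl_injective (hf (rainbowSubgraph_injOn_neighborSet (R := R) (f (Sum.inr ⟨0, hb⟩))
      (hadj i _).symm (hadj i' _).symm h))
  have hright : Function.Injective fun j ↦ χ (f (Sum.inr j)) := fun j j' h ↦
    Sum.inr_injective (hf (rainbowSubgraph_injOn_neighborSet (R := R) (f (Sum.inl ⟨0, ha⟩))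
      (hadj _ j) (hadj _ j') h))
  have hcard := hfree _ hleft (univ.image fun j ↦ χ (f (Sum.inr j)))
    (forall_mem_image.2 fun j _ i ↦ (hadj i j).2.1)
  rw [card_image_of_injective _ hright, card_univ, Fintype.card_fin] at hcard
  exact hcard.false

variable [DecidableEq V] {A : Finset V} {φ ψ : V → X} {u v : V}

theorem collides_of_collides_univ_piecewise_of_mem (hA : ∀ u v, G.Adj u v → (u ∈ A ↔ v ∉ A))
    (huv : G.Adj u v) (hv : v ∈ A) (h : Collides G univ (A.piecewise ψ φ) u v) :
    Collides G A ψ u v := by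
  obtain ⟨x, -, hux, hxv, hx⟩ := h
  have hxA : x ∈ A := not_not.1 fun hxA ↦ (hA u v huv).1 ((hA u x hux).2 hxA) hv
  exact ⟨x, hxA, hux, hxv, by rwa [piecewise_eq_of_mem _ _ _ hxA, piecewise_eq_of_mem _ _ _ hv]
    at hx⟩

theorem collides_of_collides_univ_piecewise_of_notMem (hA : ∀ u v, G.Adj u v → (u ∈ A ↔ v ∉ A))
    (huv : G.Adj u v) (hv : v ∉ A) (h : Collides G univ (A.piecewise ψ φ) u v) :
    Collides G Aᶜ φ u v := by
  obtain ⟨x, -, hux, hxv, hx⟩ := h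
  have hxA : x ∉ A := (hA u x hux).1 ((hA u v huv).2 hv)
  exact ⟨x, mem_compl.2 hxA, hux, hxv,
    by rwa [piecewise_eq_of_notMem _ _ _ hxA, piecewise_eq_of_notMem _ _ _ hv] at hx⟩

theorem rainbowSubgraph_piecewise_adj (hA : ∀ u v, G.Adj u v → (u ∈ A ↔ v ∉ A)) (hu : u ∈ A)
    (huv : G.Adj u v) (hψφ : R (ψ u) (φ v)) (hφ : ¬ Collides G Aᶜ φ u v)
    (hψ : ¬ Collides G A ψ v u) : (rainbowSubgraph G R (A.piecewise ψ φ)).Adj u v := by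
  have hv : v ∉ A := (hA u v huv).1 hu
  refine ⟨huv, ?_, mt (collides_of_collides_univ_piecewise_of_notMem hA huv hv) hφ,
    mt (collides_of_collides_univ_piecewise_of_mem hA huv.symm hu) hψ⟩
  rwa [piecewise_eq_of_mem _ _ _ hu, piecewise_eq_of_notMem _ _ _ hv]

end RainbowSubgraph

section Bipartite

variable {V X : Type*} [Fintype V] [DecidableEq V] [DecidableEq X]

theorem degree_le_two_mul_card_filter_spoiled_or (G : SimpleGraph V) [DecidableRel G.Adj]
    (U : Finset V) (f : V → X) (b : V) :
    G.degree b ≤ 2 * #{a ∈ G.neighborFinset b |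
      Spoiled G U f b (G.neighborFinset b) ∨ ¬ Collides G U f a b} := by
  rw [← card_neighborFinset_eq_degree]
  by_cases hb : Spoiled G U f b (G.neighborFinset b)
  · simp only [hb, true_or, filter_true]
    lia
  · simpa only [hb, false_or] using card_le_two_mul_card_filter_not_collides hb

variable {G : SimpleGraph V} [DecidableRel G.Adj] {P Q : Finset X} {d q h : ℕ}

theorem exists_recolouring_of_forall_le_card (hPQ : Disjoint P Q)
    (hQ : (2 * 3 ^ 33 + 60) * d ≤ #Q) (hd16 : 16 ≤ d) (hlog : 21 * Real.log d ≤ √d)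
    (hd : ∀ w, G.degree w ≤ d) {U : Finset V} {f : V → X} (hfP : ∀ b ∈ U, f b ∈ P)
    {M : V → X → Finset V} (hMN : ∀ b y, M b y ⊆ G.neighborFinset b)
    (hM : ∀ b ∈ U, ∀ y, h ≤ #(M b y))
    (hfM : ∀ b ∈ U, ¬ Spoiled G U f b (G.neighborFinset b) → ∀ y, ∀ a ∈ M b y,
      ¬ Collides G U f a b) :
    ∃ φ : V → X,
      (∀ b ∈ U, ¬ Spoiled G U f b (G.neighborFinset b) →
        φ b = f b ∧ ∀ a, Collides G U φ a b → Collides G U f a b) ∧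
      ∀ b ∈ U, h ≤ 2 * #{a ∈ M b (φ b) | ¬ Collides G U φ a b} := by
  let S : Finset V := {b ∈ U | Spoiled G U f b (G.neighborFinset b)}
  obtain ⟨g, hgQ, hg⟩ := hasUnspoiledColouring_of_mul_le_card (U := S) hd16 hlog hd hMN hQ
  have hkeep (b : V) (hb : b ∈ U) (hbS : b ∉ S) (a : V) :
      Collides G U (S.piecewise g f) a b → Collides G U f a b :=
    collides_of_collides_piecewise_of_notMem hPQ hfP hgQ hb hbS
  refine ⟨S.piecewise g f, fun b hb hsp ↦ ?_,
    fun b hb ↦ (hM b hb (S.piecewise g f b)).trans ?_⟩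
  · have hbS : b ∉ S := fun h ↦ hsp (mem_filter.1 h).2
    exact ⟨piecewise_eq_of_notMem _ _ _ hbS, hkeep b hb hbS⟩
  · by_cases hbS : b ∈ S
    · refine card_le_two_mul_card_filter_not_collides fun hsp ↦ hg b hbS ?_
      rw [piecewise_eq_of_mem _ _ _ hbS] at hsp
      exact hsp.mono fun a _ ↦ collides_of_collides_piecewise_of_mem hPQ hfP hgQ hbS
    · have hsp : ¬ Spoiled G U f b (G.neighborFinset b) := fun h ↦ hbS (mem_filter.2 ⟨hb, h⟩)
      rw [filter_true_of_mem fun a ha ↦ mt (hkeep b hb hbS a) (hfM b hb hsp _ a ha)]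
      lia

variable [Fintype X] {R : X → X → Prop} [DecidableRel R]

theorem exists_unspoiled_partner_colouring (hP : IsBalancedPalette R P d q h) (hPQ : Disjoint P Q)
    (hQ : (2 * 3 ^ 33 + 60) * d ≤ #Q) (hd16 : 16 ≤ d) (hlog : 21 * Real.log d ≤ √d)
    (hd : ∀ w, G.degree w ≤ d) {U : Finset V} {T : V → X → Finset V}
    (hT : ∀ u c, T u c ⊆ G.neighborFinset u) {W : Finset V} {Γ : V → Finset V}
    (hΓ : ∀ w ∈ W, Γ w ⊆ G.neighborFinset w) (hΓU : ∀ w ∈ W, Γ w ⊆ U)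
    (hdΓ : ∀ w ∈ W, d ≤ 4 * #(Γ w)) :
    ∃ ψ : V → X, (∀ u ∈ U, ¬ Spoiled G U ψ u (T u (ψ u))) ∧
      ∀ w ∈ W, ∀ y, h ≤ #{u ∈ Γ w | R (ψ u) y ∧ ¬ Collides G U ψ w u} := by
  obtain ⟨f, hfP, hf⟩ := hP.exists_colouring hd U hT hΓ hdΓ
  let S : Finset V := {u ∈ U | Spoiled G U f u (T u (f u))}
  obtain ⟨g, hgQ, hg⟩ := hasUnspoiledColouring_of_mul_le_card (U := S) hd16 hlog hd hT hQ
  refine ⟨S.piecewise g f, fun u hu ↦ not_spoiled_piecewise hPQ (fun u _ ↦ hfP u)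
    (fun u hu huS hsp ↦ huS (mem_filter.2 ⟨hu, hsp⟩)) hgQ hg hu, fun w hw y ↦ ?_⟩
  refine (hf w hw y).trans (card_le_card (monotone_filter_right _ fun u hu hgood ↦ ?_))
  obtain ⟨hRu, hnd⟩ := hgood
  obtain ⟨hsp, hcol⟩ := not_or.1 hnd
  have huS : u ∉ S := fun h ↦ hsp (mem_filter.1 h).2
  rw [piecewise_eq_of_notMem _ _ _ huS]
  exact ⟨hRu, mt (collides_of_collides_piecewise_of_notMem hPQ (fun u _ ↦ hfP u) hgQ
    (hΓU w hw hu) huS) hcol⟩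

theorem exists_rainbow_colouring_pair (hP : IsBalancedPalette R P d q h)
    (hPQ : Disjoint P Q) (hQ : (2 * 3 ^ 33 + 60) * d ≤ #Q) (hd16 : 16 ≤ d)
    (hlog : 21 * Real.log d ≤ √d) (hd : ∀ w, G.degree w ≤ d) (hd2 : ∀ w, d ≤ 2 * G.degree w)
    {A : Finset V} (hA : ∀ u v, G.Adj u v → (u ∈ A ↔ v ∉ A)) :
    ∃ φ ψ : V → X,
      (∀ a ∈ A, h ≤ 2 * #{b ∈ G.neighborFinset a |
        R (φ b) (ψ a) ∧ ¬ Collides G Aᶜ φ a b ∧ ¬ Collides G A ψ b a}) ∧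
      ∀ b ∉ A, h ≤ 2 * #{a ∈ G.neighborFinset b |
        R (ψ a) (φ b) ∧ ¬ Collides G Aᶜ φ a b ∧ ¬ Collides G A ψ b a} := by
  obtain ⟨f, hfP, hf⟩ := hP.exists_colouring hd Aᶜ (T := fun b _ ↦ G.neighborFinset b) (A := A)
    (Γ := fun a ↦ G.neighborFinset a) (fun _ _ ↦ subset_rfl) (fun _ _ ↦ subset_rfl)
    (fun a _ ↦ by rw [card_neighborFinset_eq_degree]; linarith [hd2 a])
  let B' (a : V) (y : X) : Finset V := {b ∈ G.neighborFinset a | R (f b) y ∧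
    ¬ Defective G Aᶜ (fun b _ ↦ G.neighborFinset b) f a b}
  let Γ (b : V) : Finset V := {a ∈ G.neighborFinset b |
    Spoiled G Aᶜ f b (G.neighborFinset b) ∨ ¬ Collides G Aᶜ f a b}
  obtain ⟨ψ, hψ, hψR⟩ := exists_unspoiled_partner_colouring (U := A) (T := B') (W := Aᶜ) (Γ := Γ)
    hP hPQ hQ hd16 hlog hd (fun _ _ ↦ filter_subset _ _) (fun _ _ ↦ filter_subset _ _)
    (fun b hb a ha ↦ (hA a b ((mem_neighborFinset ..).1 (mem_filter.1 ha).1).symm).2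
      (mem_compl.1 hb))
    (fun b _ ↦ by linarith [degree_le_two_mul_card_filter_spoiled_or G Aᶜ f b, hd2 b])
  let A' (b : V) (y : X) : Finset V := {a ∈ Γ b | R (ψ a) y ∧ ¬ Collides G A ψ b a}
  obtain ⟨φ, hφf, hφ⟩ := exists_recolouring_of_forall_le_card (M := A') hPQ hQ hd16 hlog hd
    (fun b _ ↦ hfP b) (fun _ _ ↦ (filter_subset _ _).trans (filter_subset _ _)) hψR
    (fun b _ hb y a ha ↦ (mem_filter.1 (mem_filter.1 ha).1).2.resolve_left hb)
  refine ⟨φ, ψ, fun a ha ↦ ?_, fun b hb ↦ (hφ b (mem_compl.2 hb)).trans ?_⟩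
  · refine (hf a ha (ψ a)).trans ((card_le_two_mul_card_filter_not_collides (hψ a ha)).trans ?_)
    gcongr 2 * #?_
    intro b hb
    obtain ⟨hbB', hψb⟩ := mem_filter.1 hb
    obtain ⟨hab, hRb, hdef⟩ := mem_filter.1 hbB'
    obtain ⟨hsp, hcol⟩ := not_or.1 hdef
    have hbA : b ∈ Aᶜ := mem_compl.2 ((hA a b ((mem_neighborFinset ..).1 hab)).1 ha)
    obtain ⟨hφb, hφcol⟩ := hφf b hbA hsp
    exact mem_filter.2 ⟨hab, hφb ▸ hRb, mt (hφcol a) hcol, hψb⟩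
  · gcongr 2 * #?_
    intro a ha
    obtain ⟨haA', hφa⟩ := mem_filter.1 ha
    obtain ⟨haΓ, hRa, hψa⟩ := mem_filter.1 haA'
    exact mem_filter.2 ⟨(mem_filter.1 haΓ).1, hRa, hφa, hψa⟩

end Bipartite

section BipartiteRainbow

variable {V X : Type*} [Fintype V] [Fintype X] {G : SimpleGraph V} [DecidableRel G.Adj]
  {R : X → X → Prop} [DecidableRel R] [Std.Symm R] {P Q : Finset X} {d q h : ℕ}

theorem exists_forall_le_two_mul_deg_rainbowSubgraph (hP : IsBalancedPalette R P d q h)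
    (hPQ : Disjoint P Q) (hQ : (2 * 3 ^ 33 + 60) * d ≤ #Q) (hd16 : 16 ≤ d)
    (hlog : 21 * Real.log d ≤ √d) (hd : ∀ w, G.degree w ≤ d) (hd2 : ∀ w, d ≤ 2 * G.degree w)
    {A : Finset V} (hA : ∀ u v, G.Adj u v → (u ∈ A ↔ v ∉ A)) :
    ∃ χ : V → X, ∀ u, h ≤ 2 * deg (rainbowSubgraph G R χ) u := by
  classical
  obtain ⟨φ, ψ, hφ, hψ⟩ := exists_rainbow_colouring_pair hP hPQ hQ hd16 hlog hd hd2 hA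
  refine ⟨A.piecewise ψ φ, fun u ↦ ?_⟩
  by_cases hu : u ∈ A
  · refine (hφ u hu).trans (Nat.mul_le_mul_left 2 (card_le_deg_rainbowSubgraph fun v hv ↦ ?_))
    obtain ⟨huv, hRv, hφv, hψv⟩ := mem_filter.1 hv
    exact rainbowSubgraph_piecewise_adj hA hu ((mem_neighborFinset ..).1 huv) (symm_of R hRv)
      hφv hψv
  · refine (hψ u hu).trans (Nat.mul_le_mul_left 2 (card_le_deg_rainbowSubgraph fun v hv ↦ ?_))
    obtain ⟨huv, hRv, hφv, hψv⟩ := mem_filter.1 hv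
    have hvu := ((mem_neighborFinset ..).1 huv).symm
    exact (rainbowSubgraph_piecewise_adj hA ((hA v u hvu).2 hu) hvu hRv hφv hψv).symm

end BipartiteRainbow

section CommutativeAlgebra

theorem isIntegral_of_forall_valuationSubring_mem {A L : Type*} [CommRing A] [Field L]
    [Algebra A L] {x : L}
    (hx : ∀ W : ValuationSubring L, (∀ a, algebraMap A L a ∈ W) → x ∈ W) : IsIntegral A x := by
  have hmem : x ∈ integralClosure (Subring.closure (Set.range (algebraMap A L))) L := by
    rw [← Subalgebra.mem_toSubring, ← iInf_valuationSubring_superset, Subring.mem_iInf]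
    exact fun ⟨W, hW⟩ ↦ hx W fun a ↦ hW ⟨a, rfl⟩
  obtain ⟨p, hp, hpx⟩ := hmem
  have hlifts : p.map (algebraMap _ L) ∈ Polynomial.lifts (algebraMap A L) := by
    refine (Polynomial.lifts_iff_coeff_lifts _).2 fun n ↦ ?_
    rw [Polynomial.coeff_map]
    exact (Subring.closure_eq (algebraMap A L).range).le (p.coeff n).2
  obtain ⟨q, hq, -, hmonic⟩ := Polynomial.lifts_and_natDegree_eq_and_monic hlifts (hp.map _)
  exact ⟨q, hmonic, by rw [← Polynomial.eval_map, hq, Polynomial.eval_map, hpx]⟩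

theorem exists_dual_injOn {K M : Type*} [Field K] [Infinite K] [AddCommGroup M] [Module K M]
    (Z : Finset M) : ∃ l : Module.Dual K M, Set.InjOn l Z := by
  obtain ⟨l, hl⟩ := Module.exists_dual_forall_apply_ne_zero (K := K)
    (fun z : {z : Z × Z // z.1 ≠ z.2} ↦ (z.1.1 - z.1.2 : M))
    fun z ↦ sub_ne_zero.2 (Subtype.coe_injective.ne z.2)
  refine ⟨l, fun x hx y hy hxy ↦ by_contra fun hne ↦ ?_⟩
  refine hl ⟨(⟨x, hx⟩, ⟨y, hy⟩), fun h ↦ hne (congrArg Subtype.val h)⟩ ?_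
  rw [map_sub, sub_eq_zero.2 hxy]

variable {A B : Type*} [CommRing A] [IsDomain A] [IsIntegrallyClosed A] [CommRing B] [IsDomain B]
  [Algebra A B] [Module.IsTorsionFree A B]

theorem linearIndependent_pow_natDegree_minpoly {b : B} (hb : IsIntegral A b) :
    LinearIndependent A fun i : Fin (minpoly A b).natDegree ↦ b ^ (i : ℕ) := by
  classical
  refine Fintype.linearIndependent_iff.2 fun g hg i ↦ ?_
  set p := Polynomial.ofFn (minpoly A b).natDegree g with hp
  have hpb : Polynomial.aeval b p = 0 := by
    rw [← hg, hp, Polynomial.ofFn_eq_sum_monomial, map_sum]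
    simp only [Polynomial.aeval_monomial, Algebra.smul_def]
  have hp0 : p = 0 := by
    by_contra hp0
    refine (minpoly.IsIntegrallyClosed.degree_le_of_ne_zero hp0 hpb).not_gt ?_
    rw [Polynomial.degree_eq_natDegree (minpoly.ne_zero hb)]
    exact Polynomial.ofFn_degree_lt g
  simpa [hp, Polynomial.ofFn_coeff_eq_val_of_lt] using congrArg (Polynomial.coeff · i) hp0

theorem natDegree_minpoly_le_card_of_top_le_span_sup [Module.Finite A B] {𝔪 : Ideal A}
    (h𝔪 : 𝔪 ≠ ⊤) {T : Finset B} (hT : ⊤ ≤ Submodule.span A (T : Set B) ⊔ 𝔪 • ⊤) (b : B) :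
    (minpoly A b).natDegree ≤ #T := by
  obtain ⟨r, hr, hrT⟩ := Submodule.exists_sub_one_mem_and_smul_le_of_fg_of_le_sup
    Module.Finite.fg_top le_rfl hT
  have hr0 : r ≠ 0 := by
    rintro rfl
    exact h𝔪 ((Ideal.eq_top_iff_one _).2 (by simpa using neg_mem hr))
  have hindep := (linearIndependent_pow_natDegree_minpoly (Algebra.IsIntegral.isIntegral b)).map'
    (LinearMap.lsmul A B r) (LinearMap.ker_lsmul hr0)
  have hcard := linearIndependent_le_span' _ hindep (T : Set B) (by
    rintro _ ⟨i, rfl⟩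
    exact hrT (Submodule.smul_mem_pointwise_smul _ _ _ trivial))
  simpa using hcard

end CommutativeAlgebra

section Codimension

variable (K : Type*) {S : Type*} [Field K] [CommRing S] [Algebra K S]

/-- The ideal `J` has codimension at most `n` over `K`: some `n` elements span the ring modulo
`J`. -/
def CodimLE (J : Ideal S) (n : ℕ) : Prop :=
  ∃ T : Finset S, #T ≤ n ∧ Submodule.span K (T : Set S) ⊔ J.restrictScalars K = ⊤

variable {K} {J J' : Ideal S} {n : ℕ}

theorem CodimLE.mono (hJ : J ≤ J') : CodimLE K J n → CodimLE K J' n := fun ⟨T, hTn, hT⟩ ↦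
  ⟨T, hTn, top_unique (hT.ge.trans (sup_le_sup_left
    (show J.restrictScalars K ≤ J'.restrictScalars K from hJ) _))⟩

theorem codimLE_top : CodimLE K (⊤ : Ideal S) 0 := ⟨∅, by simp, by simp⟩

theorem CodimLE.add_of_mul_mem {m : ℕ} {u : S} (hJ' : ∀ s ∈ J', u * s ∈ J)
    (hm : CodimLE K (J ⊔ Ideal.span {u}) m) (hn : CodimLE K J' n) : CodimLE K J (m + n) := by
  classical
  obtain ⟨T, hTm, hT⟩ := hm
  obtain ⟨T', hTn, hT'⟩ := hn
  refine ⟨T ∪ T'.image (u * ·), (card_union_le _ _).trans (add_le_add hTm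
    (card_image_le.trans hTn)), top_unique fun p _ ↦ ?_⟩
  obtain ⟨q, hq, r, hr, rfl⟩ := Submodule.mem_sup.1 (hT.ge (Submodule.mem_top (x := p)))
  obtain ⟨s, hs, t, ht, rfl⟩ := Submodule.mem_sup.1 hr
  obtain ⟨c, rfl⟩ := Ideal.mem_span_singleton'.1 ht
  obtain ⟨q', hq', s', hs', rfl⟩ := Submodule.mem_sup.1 (hT'.ge (Submodule.mem_top (x := c)))
  have hspan : q + u * q' ∈ Submodule.span K (T ∪ T'.image (u * ·) : Set S) := by
    rw [Submodule.span_union]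
    refine Submodule.add_mem_sup hq ?_
    have := Submodule.mem_map_of_mem (f := LinearMap.mulLeft K u) hq'
    rwa [Submodule.map_span, ← coe_image] at this
  rw [show q + (s + (q' + s') * u) = q + u * q' + (s + u * s') by ring]
  exact Submodule.add_mem_sup (by simpa using hspan) (J.add_mem hs (hJ' s' hs'))

theorem codimLE_card_mul_of_prod_mem {ι : Type*} {u : ι → S} {A : Finset ι}
    (hJ : ∏ i ∈ A, u i ∈ J) (hA : ∀ i ∈ A, CodimLE K (J ⊔ Ideal.span {u i}) n) :
    CodimLE K J (#A * n) := by
  classical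
  induction A using Finset.induction_on generalizing J with
  | empty =>
    rw [prod_empty] at hJ
    simpa [(Ideal.eq_top_iff_one J).2 hJ] using codimLE_top
  | insert i A hi ih =>
    rw [prod_insert hi] at hJ
    rw [forall_mem_insert] at hA
    let J' : Ideal S := Submodule.comap (LinearMap.mulLeft S (u i)) J
    have hJJ' : J ≤ J' := fun x hx ↦ J.mul_mem_left _ hx
    have hcolon : CodimLE K J' (#A * n) :=
      ih hJ fun k hk ↦ (hA.2 k hk).mono (sup_le_sup_right hJJ' _)
    rw [card_insert_of_notMem hi, add_one_mul, add_comm]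
    exact hA.1.add_of_mul_mem (fun _ hs ↦ hs) hcolon

end Codimension

section ShiftedProducts

open MvPolynomial

variable {K ι : Type*} [Field K] {α : ι → ι → K}

theorem codimLE_one_of_forall_X_sub_C_mem {c : ι → K} {Q : Ideal (MvPolynomial ι K)}
    (hQ : ∀ i, X i - C (c i) ∈ Q) : CodimLE K Q 1 := by
  have hsub : ∀ p : MvPolynomial ι K, p - C (eval c p) ∈ Q := by
    intro p
    induction p using MvPolynomial.induction_on with
    | C a => simp
    | add p q hp hq =>
      rw [map_add, map_add, add_sub_add_comm]
      exact Q.add_mem hp hq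
    | mul_X p i hp =>
      rw [map_mul, map_mul, eval_X, show p * X i - C (eval c p) * C (c i) =
        X i * (p - C (eval c p)) + C (eval c p) * (X i - C (c i)) by ring]
      exact Q.add_mem (Q.mul_mem_left _ hp) (Q.mul_mem_left _ (hQ i))
  refine ⟨{1}, by simp, top_unique fun p _ ↦ ?_⟩
  rw [← add_sub_cancel (C (eval c p)) p]
  refine Submodule.add_mem_sup ?_ (hsub p)
  rw [← mul_one (C (eval c p)), ← smul_eq_C_mul]
  exact Submodule.smul_mem _ _ (Submodule.subset_span (by simp))

theorem mem_of_X_sub_C_mul_mem {i : ι} {s t : K} (hst : s ≠ t) {p : MvPolynomial ι K}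
    {Q : Ideal (MvPolynomial ι K)} (hs : X i - C s ∈ Q) (hp : (X i - C t) * p ∈ Q) : p ∈ Q := by
  have hinv : C (s - t)⁻¹ * C (s - t) = (1 : MvPolynomial ι K) := by
    rw [← C_mul, inv_mul_cancel₀ (sub_ne_zero.2 hst), C_1]
  rw [C_sub] at hinv
  rw [show p = C (s - t)⁻¹ * ((X i - C t) * p - p * (X i - C s)) by
    linear_combination -p * hinv]
  exact Q.mul_mem_left _ (Q.sub_mem hp (Q.mul_mem_left _ hs))

theorem codimLE_factorial_of_forall_prod_mem (hα : ∀ i, Function.Injective fun j ↦ α j i) {k : ℕ}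
    {A B : Finset ι} (hA : #A = k) (hB : #B = k) {Q : Ideal (MvPolynomial ι K)}
    (hprod : ∀ j ∈ B, ∏ i ∈ A, (X i - C (α j i)) ∈ Q)
    (hlin : ∀ i ∉ A, ∃ c, X i - C c ∈ Q) : CodimLE K Q k.factorial := by
  classical
  induction k generalizing A B Q with
  | zero =>
    rw [card_eq_zero] at hA
    choose c hc using fun i ↦ hlin i (by simp [hA])
    exact codimLE_one_of_forall_X_sub_C_mem hc
  | succ k ih =>
    obtain ⟨j₀, hj₀⟩ : B.Nonempty := card_pos.1 (by lia)
    rw [Nat.factorial_succ, ← hA]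
    refine codimLE_card_mul_of_prod_mem (hprod j₀ hj₀) fun i hi ↦ ?_
    have hi_mem : X i - C (α j₀ i) ∈ Q ⊔ Ideal.span {X i - C (α j₀ i)} :=
      Ideal.mem_sup_right (Ideal.mem_span_singleton_self _)
    refine ih (A := A.erase i) (B := B.erase j₀) (by rw [card_erase_of_mem hi]; lia)
      (by rw [card_erase_of_mem hj₀]; lia) (fun j hj ↦ ?_) fun i' hi' ↦ ?_
    · obtain ⟨hne, hjB⟩ := mem_erase.1 hj
      refine mem_of_X_sub_C_mul_mem (fun h ↦ hne (hα i h).symm) hi_mem ?_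
      rw [mul_prod_erase A (fun i ↦ X i - C (α j i)) hi]
      exact Ideal.mem_sup_left (hprod j hjB)
    · obtain rfl | hii := eq_or_ne i' i
      · exact ⟨_, hi_mem⟩
      · obtain ⟨c, hc⟩ := hlin i' fun h ↦ hi' (mem_erase.2 ⟨hii, h⟩)
        exact ⟨c, Ideal.mem_sup_left hc⟩

variable [Fintype ι]

/-- The polynomial `∏ i, (X i - α j i)`. Over a splitting field, the norm equations defining the
common neighbours in the projective norm graph prescribe the values of these polynomials. -/
noncomputable def shiftedProd (α : ι → ι → K) (j : ι) : MvPolynomial ι K :=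
  ∏ i, (X i - C (α j i))

theorem eval_shiftedProd (x : ι → K) (j : ι) :
    eval x (shiftedProd α j) = ∏ i, (x i - α j i) := by
  simp [shiftedProd]

theorem mem_valuationSubring_of_forall_prod_sub_mem {L : Type*} [Field L] [Algebra K L]
    (hα : ∀ i, Function.Injective fun j ↦ α j i) {W : ValuationSubring L}
    (hK : ∀ k, algebraMap K L k ∈ W) {x : ι → L}
    (hx : ∀ j, ∏ i, (x i - algebraMap K L (α j i)) ∈ W) (i₀ : ι) : x i₀ ∈ W := by
  classical
  by_contra hxi₀
  -- A factor at `i₀` is large, so every product has a small factor elsewhere.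
  have hsmall : ∀ j, ∃ i : {i // i ≠ i₀}, W.valuation (x i - algebraMap K L (α j i)) < 1 := by
    intro j
    by_contra! hlarge
    have hprod := (W.valuation_le_one_iff _).2 (hx j)
    rw [map_prod, ← mul_prod_erase _ _ (mem_univ i₀)] at hprod
    have hi₀ : 1 < W.valuation (x i₀ - algebraMap K L (α j i₀)) := by
      rw [← not_le, W.valuation_le_one_iff]
      exact fun h ↦ hxi₀ (by simpa using W.add_mem _ _ h (hK (α j i₀)))
    have hrest : 1 ≤ ∏ i ∈ univ.erase i₀, W.valuation (x i - algebraMap K L (α j i)) :=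
      one_le_prod' fun i hi ↦ hlarge ⟨i, ne_of_mem_erase hi⟩
    exact hprod.not_gt (hi₀.trans_le (le_mul_of_one_le_right' hrest))
  choose g hg using hsmall
  obtain ⟨j, j', hne, hgj⟩ := Fintype.exists_ne_map_eq_of_card_lt g
    (Fintype.card_subtype_lt (x := i₀) (by simp))
  have hdiff := W.valuation.map_sub_lt (hg j) (hgj ▸ hg j')
  rw [sub_sub_sub_cancel_left, ← map_sub] at hdiff
  have hne0 : α j' (g j) - α j (g j) ≠ 0 := sub_ne_zero.2 fun h ↦ hne (hα _ h).symm
  have hinv := (W.valuation_le_one_iff _).2 (hK (α j' (g j) - α j (g j))⁻¹)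
  have hone : W.valuation (algebraMap K L (α j' (g j) - α j (g j))) *
      W.valuation (algebraMap K L (α j' (g j) - α j (g j))⁻¹) = 1 := by
    rw [← map_mul, ← map_mul, mul_inv_cancel₀ hne0, map_one, map_one]
  exact (mul_le_of_le_one_right' hinv).not_gt (hone ▸ hdiff)

theorem isIntegral_adjoin_shiftedProd (hα : ∀ i, Function.Injective fun j ↦ α j i) :
    Algebra.IsIntegral (Algebra.adjoin K (Set.range (shiftedProd α))) (MvPolynomial ι K) := by
  let A := Algebra.adjoin K (Set.range (shiftedProd α))
  have hX : ∀ i, IsIntegral A (X i : MvPolynomial ι K) := by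
    intro i
    let S := MvPolynomial ι K
    refine (isIntegral_algebraMap_iff (IsFractionRing.injective S (FractionRing S))).1 <|
      isIntegral_of_forall_valuationSubring_mem fun W hW ↦ ?_
    refine mem_valuationSubring_of_forall_prod_sub_mem hα (fun k ↦ hW (algebraMap K A k))
      (x := fun i ↦ algebraMap S (FractionRing S) (X i)) (fun j ↦ ?_) i
    have hj : algebraMap S (FractionRing S) (shiftedProd α j) ∈ W :=
      hW ⟨shiftedProd α j, Algebra.subset_adjoin ⟨j, rfl⟩⟩
    simp only [shiftedProd, map_prod, map_sub] at hj
    exact hj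
  refine ⟨fun p ↦ ?_⟩
  induction p using MvPolynomial.induction_on with
  | C a => exact isIntegral_algebraMap (x := algebraMap K A a)
  | add p q hp hq => exact hp.add hq
  | mul_X p i hp => exact hp.mul (hX i)

theorem algebraicIndependent_shiftedProd (hα : ∀ i, Function.Injective fun j ↦ α j i) :
    AlgebraicIndependent K (shiftedProd α) := by
  have := isIntegral_adjoin_shiftedProd hα
  refine (Algebra.IsAlgebraic.isTranscendenceBasis_of_lift_le_trdeg_of_finite K
    (shiftedProd α) ?_).1
  rw [MvPolynomial.trdeg_of_isDomain, Cardinal.lift_lift]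

theorem isIntegrallyClosed_adjoin_shiftedProd (hα : ∀ i, Function.Injective fun j ↦ α j i) :
    IsIntegrallyClosed (Algebra.adjoin K (Set.range (shiftedProd α))) :=
  .of_equiv (algebraicIndependent_shiftedProd hα).aevalEquiv.toRingEquiv

theorem finite_adjoin_shiftedProd (hα : ∀ i, Function.Injective fun j ↦ α j i) :
    Module.Finite (Algebra.adjoin K (Set.range (shiftedProd α))) (MvPolynomial ι K) := by
  have := isIntegral_adjoin_shiftedProd hα
  have := Algebra.FiniteType.of_restrictScalars_finiteType K
    (Algebra.adjoin K (Set.range (shiftedProd α))) (MvPolynomial ι K)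
  exact Algebra.IsIntegral.finite

theorem ideal_span_shiftedProd_ne_top :
    Ideal.span (Set.range fun j ↦ (⟨shiftedProd α j, Algebra.subset_adjoin ⟨j, rfl⟩⟩ :
      Algebra.adjoin K (Set.range (shiftedProd α)))) ≠ ⊤ := by
  let A := Algebra.adjoin K (Set.range (shiftedProd α))
  have hker : Ideal.span (Set.range fun j ↦ (⟨shiftedProd α j, Algebra.subset_adjoin ⟨j, rfl⟩⟩ :
      A)) ≤ RingHom.ker ((eval fun i ↦ α i i).comp (algebraMap A (MvPolynomial ι K))) := by
    refine Ideal.span_le.2 ?_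
    rintro _ ⟨j, rfl⟩
    refine (eval_shiftedProd _ j).trans (prod_eq_zero (mem_univ j) (sub_self _))
  exact ne_top_of_le_ne_top (RingHom.ker_ne_top _) hker

theorem natDegree_minpoly_adjoin_shiftedProd_le (hα : ∀ i, Function.Injective fun j ↦ α j i)
    (p : MvPolynomial ι K) :
    (minpoly (Algebra.adjoin K (Set.range (shiftedProd α))) p).natDegree ≤
      (Fintype.card ι).factorial := by
  have := isIntegrallyClosed_adjoin_shiftedProd hα
  have := finite_adjoin_shiftedProd hα
  obtain ⟨T, hTcard, hT⟩ := codimLE_factorial_of_forall_prod_mem (A := univ) (B := univ)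
    (Q := Ideal.span (Set.range (shiftedProd α))) hα rfl rfl
    (fun j _ ↦ Ideal.subset_span ⟨j, rfl⟩) (fun i hi ↦ absurd (mem_univ i) hi)
  refine (natDegree_minpoly_le_card_of_top_le_span_sup ideal_span_shiftedProd_ne_top
    (T := T) (fun q _ ↦ ?_) p).trans hTcard
  obtain ⟨s, hs, t, ht, rfl⟩ := Submodule.mem_sup.1 (hT.ge (Submodule.mem_top (x := q)))
  refine Submodule.add_mem_sup (Submodule.span_le_restrictScalars K _ _ hs) ?_
  rw [Ideal.smul_top_eq_map, Ideal.map_span, ← Set.range_comp]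
  exact ht

theorem card_le_factorial_of_forall_prod_sub_eq [Infinite K]
    (hα : ∀ i, Function.Injective fun j ↦ α j i) {β : ι → K} {Z : Finset (ι → K)}
    (hZ : ∀ x ∈ Z, ∀ j, ∏ i, (x i - α j i) = β j) : #Z ≤ (Fintype.card ι).factorial := by
  classical
  obtain rfl | ⟨x₀, hx₀⟩ := Z.eq_empty_or_nonempty
  · simp
  obtain ⟨l, hl⟩ := exists_dual_injOn (K := K) Z
  let A := Algebra.adjoin K (Set.range (shiftedProd α))
  let h : MvPolynomial ι K := ∑ i, C (l (Pi.single i 1)) * X i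
  have heval : ∀ x, eval x h = l x := by
    intro x
    simp only [h, map_sum, map_mul, eval_C, eval_X]
    conv_rhs => rw [pi_eq_sum_univ' x, map_sum]
    refine sum_congr rfl fun i _ ↦ ?_
    rw [map_smul, smul_eq_mul, mul_comm]
  let evalA (x : ι → K) : A →ₐ[K] K := (aeval x).comp A.val
  have hconst : ∀ x ∈ Z, evalA x = evalA x₀ := by
    intro x hx
    refine AlgHom.adjoin_ext ?_
    rintro _ ⟨j, rfl⟩
    change eval x (shiftedProd α j) = eval x₀ (shiftedProd α j)
    rw [eval_shiftedProd, eval_shiftedProd, hZ x hx, hZ x₀ hx₀]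
  have := isIntegral_adjoin_shiftedProd hα
  let m := (minpoly A h).map (evalA x₀ : A →+* K)
  have hm : m.Monic := (minpoly.monic (Algebra.IsIntegral.isIntegral h)).map _
  have hroots : Z.image l ⊆ m.roots.toFinset := by
    refine image_subset_iff.2 fun x hx ↦ ?_
    rw [Multiset.mem_toFinset, Polynomial.mem_roots hm.ne_zero, Polynomial.IsRoot.def,
      Polynomial.eval_map, ← hconst x hx, ← heval]
    have hx0 := congrArg (eval x) (minpoly.aeval A h)
    rwa [map_zero, Polynomial.aeval_def, Polynomial.hom_eval₂] at hx0
  calc #Z = #(Z.image l) := (card_image_of_injOn hl).symm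
    _ ≤ #m.roots.toFinset := card_le_card hroots
    _ ≤ m.roots.card := Multiset.toFinset_card_le _
    _ ≤ m.natDegree := m.card_roots'
    _ ≤ (minpoly A h).natDegree := Polynomial.natDegree_map_le
    _ ≤ (Fintype.card ι).factorial := natDegree_minpoly_adjoin_shiftedProd_le hα h

end ShiftedProducts

section NormGraph

variable {F L : Type*} [Field F] [Field L] [Algebra F L]

theorem card_le_factorial_of_forall_norm_add_eq [FiniteDimensional F L] [Algebra.IsSeparable F L]
    {c : Fin (Module.finrank F L) → L} (hc : c.Injective) {γ : Fin (Module.finrank F L) → F}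
    {W : Finset L} (hW : ∀ y ∈ W, ∀ j, Algebra.norm F (y + c j) = γ j) :
    #W ≤ (Module.finrank F L).factorial := by
  classical
  let E := AlgebraicClosure F
  let e : (L →ₐ[F] E) ≃ Fin (Module.finrank F L) := Fintype.equivFinOfCardEq (AlgHom.card F L E)
  let conj (y : L) (σ : L →ₐ[F] E) : E := σ y
  have hconj : conj.Injective := fun y z h ↦
    (IsAlgClosed.lift (M := E) : L →ₐ[F] E).injective (congrFun h _)
  have hcard := card_le_factorial_of_forall_prod_sub_eq (Z := W.image conj)
    (α := fun τ σ ↦ -σ (c (e τ))) (β := fun τ ↦ algebraMap F E (γ (e τ)))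
    (fun σ τ τ' h ↦ e.injective (hc (σ.injective (neg_injective h)))) (by
      rw [forall_mem_image]
      intro y hy τ
      rw [← hW y hy (e τ), Algebra.norm_eq_prod_embeddings]
      simp only [conj, sub_neg_eq_add, map_add])
  rwa [card_image_of_injective _ hconj, AlgHom.card] at hcard

variable (F L) in
/-- Adjacency in the projective norm graph of Alon, Rónyai and Szabó, on the vertex set
`L × Fˣ`. Loops are not excluded. -/
def NormRel (x y : L × Fˣ) : Prop :=
  Algebra.norm F (x.1 + y.1) = (x.2 : F) * y.2

instance : Std.Symm (NormRel F L) where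
  symm x y h := by rw [NormRel, add_comm, mul_comm]; exact h

variable {x y w : L × Fˣ}

theorem NormRel.eq_of_fst_eq (hx : NormRel F L x w) (hy : NormRel F L y w) (h : x.1 = y.1) :
    x = y := by
  refine Prod.ext h (Units.ext (mul_right_cancel₀ w.2.ne_zero ?_))
  rw [← hx, ← hy, h]

theorem card_filter_normRel_le [Fintype Fˣ] [DecidableRel (NormRel F L)]
    (Λ : Finset L) (y : L × Fˣ) :
    #{x ∈ Λ ×ˢ (univ : Finset Fˣ) | NormRel F L x y} ≤ #Λ := by
  refine card_le_card_of_injOn Prod.fst (fun x hx ↦ ?_) fun x hx x' hx' h ↦ ?_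
  · exact (mem_product.1 (mem_filter.1 hx).1).1
  · exact (mem_filter.1 hx).2.eq_of_fst_eq (mem_filter.1 hx').2 h

variable [FiniteDimensional F L]

theorem NormRel.add_ne_zero (h : NormRel F L x y) : x.1 + y.1 ≠ 0 := by
  rw [← Algebra.norm_ne_zero_iff (R := F), h]
  exact mul_ne_zero x.2.ne_zero y.2.ne_zero

-- Inversion about `y` removes the unknown second coordinate of `w` from the norm equations.
theorem NormRel.norm_inv_add_inv_sub (hx : NormRel F L x w) (hy : NormRel F L y w)
    (hxy : x.1 ≠ y.1) :
    Algebra.norm F ((w.1 + y.1)⁻¹ + (x.1 - y.1)⁻¹) =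
      x.2 / (y.2 * Algebra.norm F (x.1 - y.1)) := by
  have hy0 := hy.add_ne_zero
  have hsub := sub_ne_zero.2 hxy
  have hinv : (w.1 + y.1)⁻¹ + (x.1 - y.1)⁻¹ = (x.1 + w.1) * ((y.1 + w.1) * (x.1 - y.1))⁻¹ := by
    rw [add_comm w.1]
    field_simp
    ring
  rw [hinv, map_mul, Algebra.norm_inv, map_mul, hx, hy, ← div_eq_mul_inv, mul_right_comm,
    mul_div_mul_right _ _ w.2.ne_zero]

theorem card_le_factorial_of_forall_normRel [Algebra.IsSeparable F L]
    {x : Fin (Module.finrank F L + 1) → L × Fˣ} (hx : x.Injective) {W : Finset (L × Fˣ)}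
    (hW : ∀ w ∈ W, ∀ i, NormRel F L (x i) w) : #W ≤ (Module.finrank F L).factorial := by
  classical
  obtain rfl | ⟨w₀, hw₀⟩ := W.eq_empty_or_nonempty
  · simp
  have hfst : Function.Injective fun i ↦ (x i).1 := fun i j h ↦
    hx ((hW w₀ hw₀ i).eq_of_fst_eq (hW w₀ hw₀ j) h)
  let y := x (Fin.last _)
  have hinj : Set.InjOn (fun w : L × Fˣ ↦ (w.1 + y.1)⁻¹) W := fun w hw w' hw' h ↦
    (symm_of _ (hW w hw (Fin.last _))).eq_of_fst_eq (symm_of _ (hW w' hw' (Fin.last _)))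
      (add_right_cancel (inv_injective h))
  rw [← card_image_of_injOn hinj]
  refine card_le_factorial_of_forall_norm_add_eq (c := fun j ↦ ((x j.castSucc).1 - y.1)⁻¹)
    (γ := fun j ↦ (x j.castSucc).2 / (y.2 * Algebra.norm F ((x j.castSucc).1 - y.1)))
    (fun i j h ↦ Fin.castSucc_injective _ (hfst (sub_left_injective (inv_injective h)))) ?_
  rw [forall_mem_image]
  exact fun w hw j ↦ (hW w hw j.castSucc).norm_inv_add_inv_sub (hW w hw (Fin.last _))
    (hfst.ne (Fin.castSucc_lt_last j).ne)

theorem card_le_card_filter_normRel_add_one [Fintype Fˣ] [DecidableRel (NormRel F L)]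
    (Λ : Finset L) (y : L × Fˣ) :
    #Λ ≤ #{x ∈ Λ ×ˢ (univ : Finset Fˣ) | NormRel F L x y} + 1 := by
  classical
  have hsub : Λ.erase (-y.1) ⊆
      ({x ∈ Λ ×ˢ (univ : Finset Fˣ) | NormRel F L x y} : Finset (L × Fˣ)).image Prod.fst := by
    intro a ha
    obtain ⟨hay, haΛ⟩ := mem_erase.1 ha
    have hnorm : Algebra.norm F (a + y.1) ≠ 0 :=
      Algebra.norm_ne_zero_iff.2 fun h ↦ hay (eq_neg_of_add_eq_zero_left h)
    refine mem_image.2 ⟨(a, Units.mk0 _ hnorm * y.2⁻¹), mem_filter.2 ⟨by simp [haΛ], ?_⟩, rfl⟩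
    simp [NormRel]
  exact Nat.le_add_of_sub_le <|
    pred_card_le_card_erase.trans ((card_le_card hsub).trans card_image_le)

end NormGraph

section MaxCut

variable {V : Type*} (G : SimpleGraph V)

theorem between_compl_adj {A : Set V} {u v : V} :
    (G.between A Aᶜ).Adj u v ↔ G.Adj u v ∧ (u ∈ A ↔ v ∉ A) := by
  simp only [between_adj, Set.mem_compl_iff]
  tauto

theorem deleteIncidenceSet_between_symmDiff_singleton (A : Set V) (v : V) :
    (G.between (symmDiff A {v}) (symmDiff A {v})ᶜ).deleteIncidenceSet v =
      (G.between A Aᶜ).deleteIncidenceSet v := by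
  ext x y
  simp only [deleteIncidenceSet_adj, between_compl_adj, Set.mem_symmDiff, Set.mem_singleton_iff]
  grind

open Classical in
theorem degree_between_add_degree_between_symmDiff_singleton [Fintype V] (A : Set V) (v : V) :
    (G.between A Aᶜ).degree v + (G.between (symmDiff A {v}) (symmDiff A {v})ᶜ).degree v =
      G.degree v := by
  rw [← card_neighborFinset_eq_degree, ← card_neighborFinset_eq_degree,
    ← card_neighborFinset_eq_degree,
    ← card_filter_add_card_filter_not (s := G.neighborFinset v) (fun u ↦ v ∈ A ↔ u ∉ A)]
  congr 2
  · ext u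
    simp only [mem_neighborFinset, between_compl_adj, mem_filter]
  · ext u
    simp only [mem_neighborFinset, between_compl_adj, mem_filter, Set.mem_symmDiff,
      Set.mem_singleton_iff]
    grind [G.ne_of_adj]

open Classical in
theorem exists_forall_degree_le_two_mul_degree_between [Fintype V] :
    ∃ A : Set V, ∀ v, G.degree v ≤ 2 * (G.between A Aᶜ).degree v := by
  obtain ⟨A, hA⟩ := Finite.exists_max fun A : Set V ↦ #(G.between A Aᶜ).edgeFinset
  refine ⟨A, fun v ↦ ?_⟩
  let B := symmDiff A {v}
  have hdelete : #(G.between B Bᶜ).edgeFinset - (G.between B Bᶜ).degree v =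
      #(G.between A Aᶜ).edgeFinset - (G.between A Aᶜ).degree v := by
    rw [← card_edgeFinset_deleteIncidenceSet, ← card_edgeFinset_deleteIncidenceSet]
    congr! 2
    exact deleteIncidenceSet_between_symmDiff_singleton G A v
  have hsplit : (G.between A Aᶜ).degree v + (G.between B Bᶜ).degree v = G.degree v := by
    convert degree_between_add_degree_between_symmDiff_singleton G A v
  have hBv := (G.between B Bᶜ).degree_le_card_edgeFinset v
  have hmax := hA B
  lia

end MaxCut

section Scale

open Filter

theorem eventually_mul_pow_le_two_pow (M k : ℕ) : ∀ᶠ h : ℕ in atTop, M * h ^ k ≤ 2 ^ h := by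
  have hlim := tendsto_pow_const_div_const_pow_of_one_lt k (r := (2 : ℝ)) one_lt_two
  filter_upwards [hlim.eventually (gt_mem_nhds (show (0 : ℝ) < 1 / (M + 1) by positivity))]
    with h hh
  rw [div_lt_div_iff₀ (by positivity) (by positivity)] at hh
  have hpow : (0 : ℝ) ≤ (h : ℝ) ^ k := by positivity
  exact_mod_cast (show (M : ℝ) * h ^ k ≤ 2 ^ h by linarith)

theorem eventually_mul_log_le_sqrt (c : ℝ) : ∀ᶠ d : ℕ in atTop, c * Real.log d ≤ √d := by
  have hlittle : (fun x ↦ c * Real.log x) =o[atTop] fun x : ℝ ↦ x ^ (1 / 2 : ℝ) :=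
    (isLittleO_log_rpow_atTop one_half_pos).const_mul_left c
  filter_upwards [tendsto_natCast_atTop_atTop.eventually (hlittle.bound one_pos)] with d hd
  rw [one_mul, ← Real.sqrt_eq_rpow, Real.norm_of_nonneg (Real.sqrt_nonneg _)] at hd
  exact (Real.le_norm_self _).trans hd

theorem exists_prime_le_pow_and_pow_le {a n : ℕ} (ha : a ≠ 0) (hn : 2 ≤ n) :
    ∃ p, p.Prime ∧ n ≤ p ^ a ∧ p ^ a ≤ 4 ^ a * n := by
  classical
  have hex : ∃ k, n ≤ k ^ a := ⟨n, Nat.le_self_pow ha n⟩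
  set k := Nat.find hex
  have hk : n ≤ k ^ a := Nat.find_spec hex
  have hk2 : 2 ≤ k := by
    by_contra! hlt
    have := Nat.pow_le_pow_left (show k ≤ 1 by lia) a
    rw [one_pow] at this
    lia
  have hpred : (k - 1) ^ a < n := not_le.1 (Nat.find_min hex (m := k - 1) (by lia))
  obtain ⟨p, hp, hkp, hpk⟩ := Nat.exists_prime_lt_and_le_two_mul k (by lia)
  refine ⟨p, hp, hk.trans (Nat.pow_le_pow_left hkp.le a), ?_⟩
  calc p ^ a ≤ (4 * (k - 1)) ^ a := Nat.pow_le_pow_left (by lia) a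
    _ = 4 ^ a * (k - 1) ^ a := mul_pow _ _ _
    _ ≤ 4 ^ a * n := Nat.mul_le_mul_left _ hpred.le

theorem exists_mul_le_and_le_mul_of_sq_le {d q K : ℕ} (hq : 0 < q) (hqK : q ^ 2 ≤ K * d)
    (hd : 0 < d) (hKd : 4000 ^ 2 * K ≤ d) :
    ∃ h, 0 < h ∧ 4000 * q * h ≤ d ∧ d ≤ 8000 * q * h ∧ d ≤ 8000 ^ 2 * K * h ^ 2 := by
  have hqd : 4000 * q ≤ d := by
    refine (Nat.pow_le_pow_iff_left two_ne_zero).1 ?_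
    calc (4000 * q) ^ 2 = 4000 ^ 2 * q ^ 2 := mul_pow ..
      _ ≤ 4000 ^ 2 * (K * d) := Nat.mul_le_mul_left _ hqK
      _ = 4000 ^ 2 * K * d := by ring
      _ ≤ d ^ 2 := by rw [sq d]; exact Nat.mul_le_mul_right _ hKd
  have hh : 0 < d / (4000 * q) := Nat.div_pos hqd (by positivity)
  have hle : d ≤ 8000 * q * (d / (4000 * q)) := by
    have hlt := Nat.lt_mul_div_succ d (show 0 < 4000 * q by positivity)
    nlinarith
  refine ⟨d / (4000 * q), hh, Nat.mul_div_le d _, hle, Nat.le_of_mul_le_mul_right ?_ hd⟩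
  generalize d / (4000 * q) = h at hle
  calc d * d ≤ 8000 * q * h * (8000 * q * h) := Nat.mul_le_mul hle hle
    _ = 8000 ^ 2 * h ^ 2 * q ^ 2 := by ring
    _ ≤ 8000 ^ 2 * h ^ 2 * (K * d) := Nat.mul_le_mul_left _ hqK
    _ = 8000 ^ 2 * K * h ^ 2 * d := by ring

/-- The prime `p` and the target degree `h` suit a `d`-regular graph: the projective norm graph on
`𝔽_{p ^ (a - 1)} × 𝔽_pˣ` has at least `C * d` and `O(d)` vertices, and `h` is of order
`d / p`. The last field leaves room for a union bound over all colours in the local lemma. -/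
structure IsNormScale (a C d p h : ℕ) : Prop where
  prime : p.Prime
  h_pos : 0 < h
  mul_le : 4000 * (p - 1) * h ≤ d
  le_mul : d ≤ 8000 * (p - 1) * h
  mul_le_card : C * d ≤ (p - 1) * p ^ (a - 1)
  pow_le : p ^ a ≤ 4 ^ a * (2 * C) * d
  mul_le_two_pow : 8 * (d ^ 6 * (p ^ (a - 1) * (p - 1))) ≤ 2 ^ h

theorem eventually_exists_isNormScale {a C : ℕ} (ha : 2 ≤ a) (hC : 0 < C) :
    ∀ᶠ d in atTop, ∃ p h, IsNormScale a C d p h := by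
  set K := 4 ^ a * (2 * C) with hK
  obtain ⟨h₀, hh₀⟩ := eventually_atTop.1
    (eventually_mul_pow_le_two_pow (8 * K * (8000 ^ 2 * K) ^ 7) 14)
  filter_upwards [eventually_gt_atTop 0, eventually_ge_atTop (4000 ^ 2 * K),
    eventually_gt_atTop (8000 ^ 2 * K * h₀ ^ 2)] with d hd hKd hh₀d
  have hCd := Nat.mul_pos hC hd
  obtain ⟨p, hp, hple, hpK⟩ := exists_prime_le_pow_and_pow_le (a := a) (n := 2 * C * d) (by lia)
    (by lia)
  have hp2 := hp.two_le
  have hpow : p ^ a = p * p ^ (a - 1) := by rw [← pow_succ', Nat.sub_add_cancel (by lia)]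
  replace hpK : p ^ a ≤ K * d := by rwa [hK, mul_assoc]
  have hsq : (p - 1) ^ 2 ≤ K * d :=
    calc (p - 1) ^ 2 ≤ p ^ 2 := Nat.pow_le_pow_left (Nat.sub_le _ _) 2
      _ ≤ p ^ a := Nat.pow_le_pow_right hp.pos ha
      _ ≤ K * d := hpK
  obtain ⟨h, hh, hmul_le, hle_mul, hdh⟩ := exists_mul_le_and_le_mul_of_sq_le
    (Nat.sub_pos_of_lt hp.one_lt) hsq hd hKd
  refine ⟨p, h, hp, hh, hmul_le, hle_mul, ?_, hpK, ?_⟩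
  · have hhalf := Nat.mul_le_mul_right (p ^ (a - 1)) (show p ≤ 2 * (p - 1) by lia)
    rw [← hpow, mul_assoc] at hhalf
    rw [mul_assoc] at hple
    lia
  · have hh₀h : h₀ ≤ h := by
      by_contra! hlt
      exact absurd (hdh.trans (Nat.mul_le_mul_left _ (Nat.pow_le_pow_left hlt.le 2))) hh₀d.not_ge
    have hcard : p ^ (a - 1) * (p - 1) ≤ K * d :=
      (Nat.mul_le_mul_left _ (Nat.sub_le p 1)).trans (by rwa [mul_comm, ← hpow])
    calc 8 * (d ^ 6 * (p ^ (a - 1) * (p - 1))) ≤ 8 * (d ^ 6 * (K * d)) := by gcongr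
      _ = 8 * K * d ^ 7 := by ring
      _ ≤ 8 * K * (8000 ^ 2 * K * h ^ 2) ^ 7 := by gcongr
      _ = 8 * K * (8000 ^ 2 * K) ^ 7 * h ^ 14 := by ring
      _ ≤ 2 ^ h := hh₀ h hh₀h

end Scale

section NormPalette

variable {F L : Type*} [Field F] [Field L] [Algebra F L] [Fintype L] [Fintype Fˣ] {d h : ℕ}

theorem isBalancedPalette_product_univ [DecidableRel (NormRel F L)] {Λ : Finset L} (hh : 0 < h)
    (hd : 4000 * Fintype.card Fˣ * h ≤ d) (hd' : d ≤ 8000 * Fintype.card Fˣ * h)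
    (hΛ : 150000 * d ≤ #Λ * Fintype.card Fˣ)
    (hΛ' : #Λ * Fintype.card Fˣ ≤ 150000 * d + Fintype.card Fˣ)
    (hcard : 8 * (d ^ 6 * Fintype.card (L × Fˣ)) ≤ 2 ^ h) :
    IsBalancedPalette (NormRel F L) (Λ ×ˢ univ) d (Fintype.card Fˣ) h := by
  have hqd : 4000 * Fintype.card Fˣ ≤ d := (Nat.le_mul_of_pos_right _ hh).trans hd
  have hq : 0 < Fintype.card Fˣ := Fintype.card_pos
  have hΛ2 : 2 ≤ #Λ := by
    by_contra! hlt
    have := Nat.mul_le_mul_right (Fintype.card Fˣ) (show #Λ ≤ 1 by lia)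
    lia
  have hcardP : #(Λ ×ˢ (univ : Finset Fˣ)) = #Λ * Fintype.card Fˣ := by
    rw [card_product, card_univ]
  refine ⟨hq, hh, hd, hd', by rwa [hcardP], by rw [hcardP]; lia, fun y ↦ ?_, fun y ↦ ?_, hcard⟩
  · rw [hcardP]
    exact Nat.mul_le_mul_right _ (card_filter_normRel_le Λ y)
  · rw [hcardP]
    have hpartners := card_le_card_filter_normRel_add_one Λ y
    exact Nat.mul_le_mul_right _ (by lia)

theorem exists_le_mul_and_mul_le_add (n : ℕ) {q : ℕ} (hq : 0 < q) :
    ∃ m, n ≤ m * q ∧ m * q ≤ n + q := by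
  refine ⟨n / q + 1, ?_, ?_⟩
  · rw [mul_comm]
    exact (Nat.lt_mul_div_succ n hq).le
  · rw [add_mul, one_mul]
    exact Nat.add_le_add_right (Nat.div_mul_le_self n q) q

theorem exists_disjoint_normRel_palettes [DecidableRel (NormRel F L)] {N : ℕ} (hh : 0 < h)
    (hd : 4000 * Fintype.card Fˣ * h ≤ d) (hd' : d ≤ 8000 * Fintype.card Fˣ * h)
    (hN : 300000 * d + N ≤ Fintype.card Fˣ * Fintype.card L)
    (hcard : 8 * (d ^ 6 * Fintype.card (L × Fˣ)) ≤ 2 ^ h) :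
    ∃ P Q : Finset (L × Fˣ), Disjoint P Q ∧
      IsBalancedPalette (NormRel F L) P d (Fintype.card Fˣ) h ∧ N ≤ #Q := by
  classical
  have hq : 0 < Fintype.card Fˣ := Fintype.card_pos
  have hqd : 4000 * Fintype.card Fˣ ≤ d := (Nat.le_mul_of_pos_right _ hh).trans hd
  obtain ⟨m, hm, hm'⟩ := exists_le_mul_and_mul_le_add (150000 * d) hq
  have hmL : m ≤ Fintype.card L := by
    rw [mul_comm _ (Fintype.card L)] at hN
    exact Nat.le_of_mul_le_mul_right (by lia) hq
  obtain ⟨Λ, -, rfl⟩ := exists_subset_card_eq (s := (univ : Finset L)) (n := m)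
    (by rwa [card_univ])
  refine ⟨Λ ×ˢ univ, Λᶜ ×ˢ univ, disjoint_product.2 (.inl disjoint_compl_right),
    isBalancedPalette_product_univ hh hd hd' hm hm' hcard, ?_⟩
  rw [card_product, card_compl, card_univ, Nat.sub_mul, mul_comm (Fintype.card L)]
  lia

theorem deg_eq_degree {V : Type*} [Fintype V] (G : SimpleGraph V) [DecidableRel G.Adj] (v : V) :
    deg G v = G.degree v := by
  rw [deg, Set.ncard_eq_toFinset_card', ← card_neighborFinset_eq_degree, neighborFinset]

theorem exists_le_not_containsCopy_forall_le_two_mul_deg [Algebra.IsSeparable F L] {b : ℕ}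
    (hb : (Module.finrank F L).factorial < b) (hh : 0 < h)
    (hd : 4000 * Fintype.card Fˣ * h ≤ d) (hd' : d ≤ 8000 * Fintype.card Fˣ * h)
    (hL : (300000 + (2 * 3 ^ 33 + 60)) * d ≤ Fintype.card Fˣ * Fintype.card L)
    (hcard : 8 * (d ^ 6 * Fintype.card (L × Fˣ)) ≤ 2 ^ h) (hd16 : 16 ≤ d)
    (hlog : 21 * Real.log d ≤ √d) {V : Type*} [Finite V] {G : SimpleGraph V}
    (hG : RegularDeg G d) :
    ∃ H ≤ G, ¬ ContainsCopy (completeBipartiteGraph (Fin (Module.finrank F L + 1)) (Fin b)) H ∧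
      ∀ v, h ≤ 2 * deg H v := by
  classical
  have := Fintype.ofFinite V
  have hdeg (v : V) : G.degree v = d := by rw [← deg_eq_degree, hG v]
  obtain ⟨A, hA⟩ := exists_forall_degree_le_two_mul_degree_between G
  obtain ⟨P, Q, hPQ, hP, hQ⟩ := exists_disjoint_normRel_palettes (F := F) (L := L)
    (N := (2 * 3 ^ 33 + 60) * d) hh hd hd' (by rwa [← add_mul]) hcard
  obtain ⟨χ, hχ⟩ := exists_forall_le_two_mul_deg_rainbowSubgraph (G := G.between A Aᶜ)
    (A := A.toFinset) hP hPQ hQ hd16 hlog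
    (fun w ↦ (degree_le_of_le G.between_le).trans (hdeg w).le) (fun w ↦ hdeg w ▸ hA w)
    fun u v huv ↦ by simpa only [Set.mem_toFinset] using ((between_compl_adj G).1 huv).2
  exact ⟨_, (rainbowSubgraph_le ..).trans G.between_le,
    not_containsCopy_rainbowSubgraph (Nat.succ_pos _) (by lia) fun x hx W hW ↦
      (card_le_factorial_of_forall_normRel hx hW).trans_lt hb, hχ⟩

end NormPalette

theorem IsNormScale.exists_le_not_containsCopy {a b d p h : ℕ}
    (hS : IsNormScale a (300000 + (2 * 3 ^ 33 + 60)) d p h) (ha : 2 ≤ a)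
    (hb : (a - 1).factorial < b) (hd16 : 16 ≤ d) (hlog : 21 * Real.log d ≤ √d)
    {V : Type*} [Finite V] {G : SimpleGraph V} (hG : RegularDeg G d) :
    ∃ H ≤ G, ¬ ContainsCopy (completeBipartiteGraph (Fin a) (Fin b)) H ∧
      ∀ v, h ≤ 2 * deg H v := by
  classical
  obtain ⟨t, rfl⟩ : ∃ t, a = t + 1 := ⟨a - 1, by lia⟩
  have ht : t ≠ 0 := by lia
  have : Fact p.Prime := ⟨hS.prime⟩
  have := Fintype.ofFinite (GaloisField p t)
  have hrank : Module.finrank (ZMod p) (GaloisField p t) = t := GaloisField.finrank p ht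
  have hF : Fintype.card (ZMod p)ˣ = p - 1 := ZMod.card_units p
  have hL : Fintype.card (GaloisField p t) = p ^ t := by
    rw [← Nat.card_eq_fintype_card, GaloisField.card p t ht]
  have hcard := hS.mul_le_card
  have hpow := hS.mul_le_two_pow
  have hmul := hS.mul_le
  have hmul' := hS.le_mul
  rw [Nat.add_sub_cancel, ← hL, ← hF] at hcard hpow
  rw [← hF] at hmul hmul'
  rw [← Fintype.card_prod] at hpow
  rw [Nat.add_sub_cancel, ← hrank] at hb
  have key := exists_le_not_containsCopy_forall_le_two_mul_deg hb hS.h_pos hmul hmul' hcard hpow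
    hd16 hlog hG
  rwa [hrank] at key

theorem inv_mul_rpow_le_of_pow_le {a : ℕ} {d p n m K : ℝ} (ha : a ≠ 0) (hd : 0 < d) (hp : 0 ≤ p)
    (hn : 0 ≤ n) (hm : 0 < m) (hK : 0 < K) (hpK : p ^ a ≤ K * d) (hdn : d ≤ m * p * n) :
    (m * K ^ (1 / a : ℝ))⁻¹ * d ^ (1 - 1 / a : ℝ) ≤ n := by
  have hp_le : p ≤ K ^ (1 / a : ℝ) * d ^ (1 / a : ℝ) := by
    rw [← Real.mul_rpow hK.le hd.le, one_div, Real.le_rpow_inv_iff_of_pos hp (by positivity)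
      (by positivity), Real.rpow_natCast]
    exact hpK
  rw [inv_mul_le_iff₀ (by positivity), Real.rpow_sub hd, Real.rpow_one,
    div_le_iff₀ (by positivity)]
  calc d ≤ m * p * n := hdn
    _ ≤ m * (K ^ (1 / a : ℝ) * d ^ (1 / a : ℝ)) * n := by gcongr
    _ = m * K ^ (1 / a : ℝ) * n * d ^ (1 / a : ℝ) := by ring

theorem IsNormScale.inv_mul_rpow_le {a C d p h n : ℕ} (hS : IsNormScale a C d p h) (ha : a ≠ 0)
    (hC : 0 < C) (hd : 0 < d) (hn : h ≤ 2 * n) :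
    (16000 * (4 ^ a * (2 * C) : ℝ) ^ (1 / a : ℝ))⁻¹ * (d : ℝ) ^ (1 - 1 / a : ℝ) ≤ n := by
  refine inv_mul_rpow_le_of_pow_le (p := p) ha (by positivity) (by positivity) (by positivity)
    (by positivity) (by positivity) (mod_cast hS.pow_le) ?_
  have hdn : d ≤ 16000 * p * n :=
    calc d ≤ 8000 * (p - 1) * h := hS.le_mul
      _ ≤ 8000 * p * (2 * n) := by gcongr; exact Nat.sub_le p 1
      _ = 16000 * p * n := by ring
  exact_mod_cast hdn

theorem statement14 (a b : ℕ) (ha : 2 ≤ a) (hb : (a - 1).factorial < b) :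
    ∃ (c : ℝ) (d₀ : ℕ), 0 < c ∧
      ∀ d : ℕ, d₀ ≤ d →
        ∀ (V : Type) [Fintype V] (G : SimpleGraph V), RegularDeg G d →
          ∃ H : SimpleGraph V, H ≤ G ∧
            ¬ ContainsCopy (completeBipartiteGraph (Fin a) (Fin b)) H ∧
            ∀ v : V, c * (d : ℝ) ^ (1 - 1 / (a : ℝ)) ≤ (deg H v : ℝ) := by
  obtain ⟨d₀, hd₀⟩ := Filter.eventually_atTop.1 <|
    (eventually_exists_isNormScale ha (C := 300000 + (2 * 3 ^ 33 + 60)) (by positivity)).and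
      (eventually_mul_log_le_sqrt 21)
  refine ⟨(16000 * (4 ^ a * (2 * (300000 + (2 * 3 ^ 33 + 60) : ℕ)) : ℝ) ^ (1 / a : ℝ))⁻¹,
    max d₀ 16, by positivity, fun d hd V _ G hG ↦ ?_⟩
  obtain ⟨⟨p, h, hS⟩, hlog⟩ := hd₀ d (le_of_max_le_left hd)
  have hd16 : 16 ≤ d := le_of_max_le_right hd
  obtain ⟨H, hHG, hfree, hdeg⟩ := hS.exists_le_not_containsCopy ha hb hd16 hlog hG
  exact ⟨H, hHG, hfree, fun v ↦
    hS.inv_mul_rpow_le (by lia) (by positivity) (by lia) (hdeg v)⟩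
end

section
/- Let F be a graph of diameter at most 2, i.e., any two distinct vertices of F are adjacent or have a common neighbor. Then every locally injective homomorphism from F to any graph 𝒢 is injective. In particular, for all a ≤ b, every locally injective homomorphism from the complete bipartite graph K_{a,b} to a graph 𝒢 is injective, and hence the family {K_{a,b}} is closed. -/
open SimpleGraph

/-- `F` has diameter at most 2, stated through adjacency and common neighbours rather than
distances. -/
def DiameterAtMostTwo {α : Type*} (F : SimpleGraph α) : Prop :=
  ∀ u v : α, u ≠ v → F.Adj u v ∨ ∃ w : α, F.Adj u w ∧ F.Adj v w

section LocallyInjective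

variable {α β : Type*} {F : SimpleGraph α} {G : SimpleGraph β}

theorem locallyInjective_of_injective {φ : F →g G} (hφ : Function.Injective φ) :
    LocallyInjective φ :=
  fun _ => hφ.injOn

theorem LocallyInjective.injective {φ : F →g G} (hφ : LocallyInjective φ)
    (hF : DiameterAtMostTwo F) : Function.Injective φ := by
  intro u v huv
  by_contra hne
  rcases hF u v hne with hadj | ⟨w, huw, hvw⟩
  · exact (φ.map_adj hadj).ne huv
  · exact hne (hφ w huw.symm hvw.symm huv)

theorem DiameterAtMostTwo.noLocInjHom_iff_not_containsCopy (hF : DiameterAtMostTwo F)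
    (G : SimpleGraph β) : NoLocInjHom F G ↔ ¬ ContainsCopy F G :=
  not_congr <| exists_congr fun _ => ⟨fun hφ => hφ.injective hF, locallyInjective_of_injective⟩

end LocallyInjective

theorem diameterAtMostTwo_completeBipartiteGraph (α β : Type*) [Nonempty α] [Nonempty β] :
    DiameterAtMostTwo (completeBipartiteGraph α β) := by
  obtain ⟨a⟩ := ‹Nonempty α›
  obtain ⟨b⟩ := ‹Nonempty β›
  rintro (u | u) (v | v) -
  · exact Or.inr ⟨Sum.inr b, by simp, by simp⟩
  · exact Or.inl (by simp)
  · exact Or.inl (by simp)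
  · exact Or.inr ⟨Sum.inl a, by simp, by simp⟩

theorem statement19_general.{u, v, w, x} :
    (∀ (V : Type u) (F : SimpleGraph V), DiameterAtMostTwo F →
      ∀ (W : Type x) (𝒢 : SimpleGraph W) (φ : F →g 𝒢),
        LocallyInjective φ → Function.Injective φ) ∧
    (∀ (α : Type v) (β : Type w) [Nonempty α] [Nonempty β],
      (∀ (W : Type x) (𝒢 : SimpleGraph W) (φ : completeBipartiteGraph α β →g 𝒢),
        LocallyInjective φ → Function.Injective φ) ∧
      (∀ (W : Type x) (𝒢 : SimpleGraph W),
        NoLocInjHom (completeBipartiteGraph α β) 𝒢 ↔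
          ¬ ContainsCopy (completeBipartiteGraph α β) 𝒢)) := by
  refine ⟨fun _ _ hF _ _ _ hφ => hφ.injective hF, fun α β _ _ => ?_⟩
  have hK := diameterAtMostTwo_completeBipartiteGraph α β
  exact ⟨fun _ _ _ hφ => hφ.injective hK, fun _ 𝒢 => hK.noLocInjHom_iff_not_containsCopy 𝒢⟩

theorem statement19 :
    (∀ (VF : Type) [Fintype VF] (F : SimpleGraph VF),
        (∀ u v : VF, u ≠ v → F.Adj u v ∨ ∃ w : VF, F.Adj u w ∧ F.Adj v w) →
        ∀ (W : Type) [Fintype W] (𝒢 : SimpleGraph W) (φ : F →g 𝒢),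
          LocallyInjective φ → Function.Injective φ) ∧
    (∀ a b : ℕ, 1 ≤ a → a ≤ b →
      (∀ (W : Type) [Fintype W] (𝒢 : SimpleGraph W)
          (φ : completeBipartiteGraph (Fin a) (Fin b) →g 𝒢),
          LocallyInjective φ → Function.Injective φ) ∧
      (∀ (W : Type) [Fintype W] (𝒢 : SimpleGraph W),
          NoLocInjHom (completeBipartiteGraph (Fin a) (Fin b)) 𝒢 ↔
            ¬ ContainsCopy (completeBipartiteGraph (Fin a) (Fin b)) 𝒢)) := by
  obtain ⟨injective, bipartite⟩ := statement19_general.{0, 0, 0, 0}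
  refine ⟨fun VF _ F hF W _ => injective VF F hF W, fun a b ha hab => ?_⟩
  have : Nonempty (Fin a) := Fin.pos_iff_nonempty.mp ha
  have : Nonempty (Fin b) := Fin.pos_iff_nonempty.mp (ha.trans hab)
  exact ⟨fun W _ => (bipartite (Fin a) (Fin b)).1 W, fun W _ => (bipartite (Fin a) (Fin b)).2 W⟩
end
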